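/- arXiv:1902.08770 — 2 statements merged into one kernel-verified Lean document; each statement's English description precedes it below -/
import Mathlib

section
/- Let a be a positive definite Hermitian 2×2 complex matrix with A = det a > 0 and 𝔸 = A + (Im a₁₂)². Fix y = (y₁, y₂) ∈ ℝ² with y ≠ 0 and μ ∈ ℝ, write Q_w = Q(x₁ + iy₁, x₂ + iy₂) and c = (A/𝔸)·Qℝ(y). Then the following integrals over x = (x₁, x₂) ∈ ℝ² converge, and: I₀₁ := ∫_{ℝ²} dx / ( Q_w · (Q_w + Aμ²)^{3/2} ) = (π/√𝔸) ∫_c^∞ ds / ( s·(s + Aμ²)^{3/2} ); I₀₂ := ∫_{ℝ²} dx / ( Q_w² · (Q_w + Aμ²)^{1/2} ) = −(1/2)·I₀₁ + π√𝔸/( A·ϱ·Qℝ(y) ); I₀₃ := ∫_{ℝ²} dx / Q_w² = π√𝔸/( A·Qℝ(y) ), where ϱ = √(c + Aμ²). -/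
open MeasureTheory

/-- The Hermitian form `Q(w) = a₁₁|w₁|² + a₂₂|w₂|² + 2Re(a₁₂ w₁ conj(w₂))`. -/
noncomputable def Qh (a11 a22 : ℝ) (a12 w1 w2 : ℂ) : ℝ :=
  a11 * Complex.normSq w1 + a22 * Complex.normSq w2 + 2 * (a12 * w1 * (starRingEnd ℂ) w2).re

/-- The real quadratic form `Qℝ(y) = a₁₁y₁² + 2Re(a₁₂)y₁y₂ + a₂₂y₂²`. -/
noncomputable def QR (a11 a22 : ℝ) (a12 : ℂ) (y1 y2 : ℝ) : ℝ :=
  a11 * y1 ^ 2 + 2 * a12.re * y1 * y2 + a22 * y2 ^ 2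

/-- `Q_w` evaluated at `w = (x₁+iy₁, x₂+iy₂)`. -/
noncomputable def Qw (a11 a22 : ℝ) (a12 : ℂ) (y1 y2 : ℝ) (x : ℝ × ℝ) : ℝ :=
  Qh a11 a22 a12 ((x.1 : ℂ) + (y1 : ℂ) * Complex.I) ((x.2 : ℂ) + (y2 : ℂ) * Complex.I)

open MeasureTheory Filter Topology

/-- Affine triangular change of variables in the plane. -/
lemma affine_cov (p q w k1 k2 : ℝ) (hp : 0 < p) (hw : 0 < w) (G : ℝ × ℝ → ℝ)
    (hG : Integrable G) :
    Integrable (fun x : ℝ × ℝ => G (p * x.1 + q * x.2 + k1, w * x.2 + k2)) ∧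
    ∫ x : ℝ × ℝ, G (p * x.1 + q * x.2 + k1, w * x.2 + k2) = (p * w)⁻¹ * ∫ u, G u := by
  set f : ℝ × ℝ → ℝ × ℝ := fun x => (p * x.1 + q * x.2 + k1, w * x.2 + k2) with hf
  set L : ℝ × ℝ →L[ℝ] ℝ × ℝ := (Matrix.toLin (.finTwoProd ℝ) (.finTwoProd ℝ)
    !![p, q; 0, w]).toContinuousLinearMap with hL
  have hdet : L.det = p * w := by
    rw [hL]
    simp only [LinearMap.det_toContinuousLinearMap, LinearMap.det_toLin, Matrix.det_fin_two_of]
    ring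
  have hfL : ∀ x, f x = L x + (k1, k2) := by
    intro x
    rw [hL, Matrix.toLin_finTwoProd_toContinuousLinearMap]
    simp [hf]
  have hder : ∀ x ∈ (Set.univ : Set (ℝ × ℝ)), HasFDerivWithinAt f L Set.univ x := by
    intro x _
    have : f = fun x => L x + (k1, k2) := funext hfL
    rw [this]
    exact (L.hasFDerivAt.add_const _).hasFDerivWithinAt
  have hinj : Set.InjOn f Set.univ := by
    rintro ⟨a, b⟩ _ ⟨c, d⟩ _ h
    simp only [hf, Prod.mk.injEq] at h
    obtain ⟨h1, h2⟩ := h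
    have hbd : b = d := by
      have : w * b = w * d := by linarith
      exact mul_left_cancel₀ hw.ne' this
    subst hbd
    have : p * a = p * c := by linarith
    rw [mul_left_cancel₀ hp.ne' this]
  have himg : f '' Set.univ = Set.univ := by
    rw [Set.image_univ, Set.range_eq_univ]
    rintro ⟨u, v⟩
    refine ⟨((u - k1 - q * ((v - k2) / w)) / p, (v - k2) / w), ?_⟩
    simp only [hf, Prod.mk.injEq]
    constructor <;> field_simp <;> ring
  have hpw : 0 < p * w := mul_pos hp hw
  have h1 := integrableOn_image_iff_integrableOn_abs_det_fderiv_smul volume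
    MeasurableSet.univ hder hinj G
  have h2 := integral_image_eq_integral_abs_det_fderiv_smul volume
    MeasurableSet.univ hder hinj G
  rw [himg] at h1 h2
  simp only [integrableOn_univ, setIntegral_univ, hdet, abs_of_pos hpw, smul_eq_mul] at h1 h2
  constructor
  · have := (h1.1 hG).const_mul (p * w)⁻¹
    refine this.congr (ae_of_all _ fun x => ?_)
    simp only [← mul_assoc]
    rw [mul_assoc (p * w)⁻¹ p w, inv_mul_cancel₀ hpw.ne', one_mul]
  · rw [h2, integral_const_mul, ← mul_assoc, inv_mul_cancel₀ hpw.ne', one_mul]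

/-- Radial integration in the plane. -/
lemma radial_cov (c : ℝ) (F : ℝ → ℝ) (hF : IntegrableOn F (Set.Ioi c)) :
    Integrable (fun u : ℝ × ℝ => F (c + (u.1 ^ 2 + u.2 ^ 2))) ∧
    ∫ u : ℝ × ℝ, F (c + (u.1 ^ 2 + u.2 ^ 2)) = Real.pi * ∫ s in Set.Ioi c, F s := by
  have himg : (fun r : ℝ => c + r ^ 2) '' Set.Ioi 0 = Set.Ioi c := by
    ext s
    simp only [Set.mem_image, Set.mem_Ioi]
    constructor
    · rintro ⟨r, hr, rfl⟩
      have := pow_pos hr 2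
      linarith
    · intro hs
      refine ⟨√(s - c), Real.sqrt_pos.2 (by linarith), ?_⟩
      rw [Real.sq_sqrt (by linarith)]; ring
  have hder : ∀ x ∈ Set.Ioi (0 : ℝ),
      HasDerivWithinAt (fun r : ℝ => c + r ^ 2) (2 * x) (Set.Ioi 0) x := by
    intro x _
    have := ((hasDerivAt_pow 2 x).const_add c).hasDerivWithinAt (s := Set.Ioi 0)
    simpa using this
  have hinj : Set.InjOn (fun r : ℝ => c + r ^ 2) (Set.Ioi 0) := by
    intro a ha b hb h
    simp only [Set.mem_Ioi] at ha hb
    have h' : a ^ 2 = b ^ 2 := by simpa using h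
    exact (pow_left_inj₀ ha.le hb.le two_ne_zero).1 h'
  have h1 := (integrableOn_image_iff_integrableOn_abs_deriv_smul measurableSet_Ioi
    hder hinj F).1 (by rwa [himg])
  have h2 := integral_image_eq_integral_abs_deriv_smul measurableSet_Ioi hder hinj F
  rw [himg] at h2
  have e1 : Set.EqOn (fun x : ℝ => |2 * x| • F (c + x ^ 2))
      (fun x => 2 * (x ^ (Module.finrank ℝ ℂ - 1) • F (c + x ^ 2))) (Set.Ioi 0) := by
    intro x hx
    have hx' : (0 : ℝ) < 2 * x := mul_pos two_pos hx
    simp only [abs_of_pos hx', smul_eq_mul, Complex.finrank_real_complex]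
    norm_num
    ring
  have h3 : IntegrableOn (fun x : ℝ => x ^ (Module.finrank ℝ ℂ - 1) • F (c + x ^ 2))
      (Set.Ioi 0) := by
    have := ((integrableOn_congr_fun e1 measurableSet_Ioi).1 h1).const_mul (2⁻¹ : ℝ)
    simpa [IntegrableOn, ← mul_assoc] using! this
  have h4 : Integrable (fun z : ℂ => F (c + ‖z‖ ^ 2)) :=
    (integrable_fun_norm_addHaar (E := ℂ) volume (f := fun r => F (c + r ^ 2))).2 h3
  have h5 := integral_fun_norm_addHaar (E := ℂ) volume (fun r => F (c + r ^ 2))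
  have hmp := Complex.volume_preserving_equiv_real_prod.symm
  have hme := Complex.measurableEquivRealProd.symm.measurableEmbedding
  have hn : ∀ u : ℝ × ℝ, ‖Complex.measurableEquivRealProd.symm u‖ ^ 2 = u.1 ^ 2 + u.2 ^ 2 := by
    intro u
    rw [← Complex.normSq_eq_norm_sq, Complex.measurableEquivRealProd_symm_apply,
      Complex.normSq_mk]
    ring
  constructor
  · have := (hmp.integrable_comp_emb hme).2 h4
    simpa only [Function.comp_def, hn] using this
  · have h6 := hmp.integral_comp hme (fun z : ℂ => F (c + ‖z‖ ^ 2))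
    simp only [hn] at h6
    rw [h6, h5, h2, setIntegral_congr_fun measurableSet_Ioi e1, integral_const_mul]
    simp [Measure.real, Complex.volume_ball]
    ring

lemma Fint3 (c : ℝ) (hc : 0 < c) :
    IntegrableOn (fun s : ℝ => (s ^ 2)⁻¹) (Set.Ioi c) ∧
    ∫ s in Set.Ioi c, (s ^ 2)⁻¹ = c⁻¹ := by
  have hd : ∀ x ∈ Set.Ici c, HasDerivAt (fun s : ℝ => - s⁻¹) ((x ^ 2)⁻¹) x := by
    intro x hx
    have hx0 : x ≠ 0 := (lt_of_lt_of_le hc hx).ne'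
    simpa using! (hasDerivAt_inv hx0).neg
  have hl : Tendsto (fun s : ℝ => - s⁻¹) atTop (𝓝 0) := by
    simpa using (tendsto_inv_atTop_zero (𝕜 := ℝ)).neg
  have hp : ∀ x ∈ Set.Ioi c, 0 ≤ (x ^ 2)⁻¹ := fun x _ => by positivity
  refine ⟨integrableOn_Ioi_deriv_of_nonneg' hd hp hl, ?_⟩
  rw [integral_Ioi_of_hasDerivAt_of_nonneg' hd hp hl]
  simp

lemma Fint12 (c K : ℝ) (hc : 0 < c) (hK : 0 ≤ K) :
    IntegrableOn (fun s : ℝ => (s * (s + K) ^ ((3 : ℝ) / 2))⁻¹) (Set.Ioi c) ∧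
    IntegrableOn (fun s : ℝ => (s ^ 2 * (s + K) ^ ((1 : ℝ) / 2))⁻¹) (Set.Ioi c) ∧
    ∫ s in Set.Ioi c, (s ^ 2 * (s + K) ^ ((1 : ℝ) / 2))⁻¹ =
      -(1 / 2) * (∫ s in Set.Ioi c, (s * (s + K) ^ ((3 : ℝ) / 2))⁻¹) + (c * √(c + K))⁻¹ := by
  have h32 : ∀ x : ℝ, 0 < x → (x + K) ^ ((3 : ℝ) / 2) = (x + K) * √(x + K) := by
    intro x hx
    rw [Real.sqrt_eq_rpow, show (3 : ℝ) / 2 = 1 + 1 / 2 by norm_num,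
      Real.rpow_add (by linarith), Real.rpow_one]
  have hd : ∀ x ∈ Set.Ici c, HasDerivAt (fun s : ℝ => - (s * √(s + K))⁻¹)
      ((x ^ 2 * (x + K) ^ ((1 : ℝ) / 2))⁻¹ + 1 / 2 * (x * (x + K) ^ ((3 : ℝ) / 2))⁻¹) x := by
    intro x hx
    have hx0 : 0 < x := lt_of_lt_of_le hc hx
    have hxK : 0 < x + K := by linarith
    have hs : 0 < √(x + K) := Real.sqrt_pos.2 hxK
    have h1 : HasDerivAt (fun s : ℝ => √(s + K)) (1 / (2 * √(x + K))) x :=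
      ((hasDerivAt_id x).add_const K).sqrt hxK.ne'
    have h2 := (((hasDerivAt_id x).mul h1).inv (mul_pos hx0 hs).ne').neg
    refine HasDerivAt.congr_deriv h2 ?_
    rw [h32 x hx0, ← Real.sqrt_eq_rpow]
    have hsq : √(x + K) ^ 2 = x + K := Real.sq_sqrt hxK.le
    simp only [id, Pi.mul_apply]
    rw [← hsq, Real.sqrt_sq hs.le]
    field_simp
  have p1 : ∀ x ∈ Set.Ioi c, 0 ≤ (x * (x + K) ^ ((3 : ℝ) / 2))⁻¹ := by
    intro x hx
    have hx0 : 0 < x := lt_trans hc hx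
    positivity
  have p2 : ∀ x ∈ Set.Ioi c, 0 ≤ (x ^ 2 * (x + K) ^ ((1 : ℝ) / 2))⁻¹ := by
    intro x hx
    have hx0 : 0 < x := lt_trans hc hx
    positivity
  have hp : ∀ x ∈ Set.Ioi c, 0 ≤ (x ^ 2 * (x + K) ^ ((1 : ℝ) / 2))⁻¹
      + 1 / 2 * (x * (x + K) ^ ((3 : ℝ) / 2))⁻¹ := by
    intro x hx
    have := p1 x hx
    have := p2 x hx
    linarith
  have hl : Tendsto (fun s : ℝ => - (s * √(s + K))⁻¹) atTop (𝓝 0) := by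
    have : Tendsto (fun s : ℝ => s * √(s + K)) atTop atTop :=
      tendsto_id.atTop_mul_atTop₀ (Real.tendsto_sqrt_atTop.comp
        (tendsto_atTop_add_const_right _ _ tendsto_id))
    simpa using this.inv_tendsto_atTop.neg
  have hi := integrableOn_Ioi_deriv_of_nonneg' hd hp hl
  have hv := integral_Ioi_of_hasDerivAt_of_nonneg' hd hp hl
  have i2 : IntegrableOn (fun s : ℝ => (s ^ 2 * (s + K) ^ ((1 : ℝ) / 2))⁻¹) (Set.Ioi c) := by
    refine Integrable.mono' hi (by fun_prop) ?_
    refine (ae_restrict_iff' measurableSet_Ioi).2 (ae_of_all _ fun x hx => ?_)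
    rw [Real.norm_of_nonneg (p2 x hx)]
    have := p1 x hx
    linarith
  have i1 : IntegrableOn (fun s : ℝ => (s * (s + K) ^ ((3 : ℝ) / 2))⁻¹) (Set.Ioi c) := by
    refine Integrable.mono' (hi.const_mul 2) (by fun_prop) ?_
    refine (ae_restrict_iff' measurableSet_Ioi).2 (ae_of_all _ fun x hx => ?_)
    rw [Real.norm_of_nonneg (p1 x hx)]
    have := p2 x hx
    linarith
  refine ⟨i1, i2, ?_⟩
  rw [integral_add i2 (i1.const_mul _), integral_const_mul] at hv
  linarith

lemma Qw_cov (a11 a22 : ℝ) (a12 : ℂ) (ha11 : 0 < a11)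
    (hA : 0 < a11 * a22 - Complex.normSq a12) (y1 y2 : ℝ) (F : ℝ → ℝ)
    (hF : IntegrableOn F (Set.Ioi (((a11 * a22 - Complex.normSq a12) /
          (a11 * a22 - Complex.normSq a12 + a12.im ^ 2)) * QR a11 a22 a12 y1 y2))) :
    Integrable (fun x => F (Qw a11 a22 a12 y1 y2 x)) ∧
    ∫ x, F (Qw a11 a22 a12 y1 y2 x) =
      (Real.pi / √(a11 * a22 - Complex.normSq a12 + a12.im ^ 2)) *
      ∫ s in Set.Ioi (((a11 * a22 - Complex.normSq a12) /
          (a11 * a22 - Complex.normSq a12 + a12.im ^ 2)) * QR a11 a22 a12 y1 y2), F s := by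
  obtain ⟨r, m⟩ := a12
  simp only [Complex.normSq_mk] at *
  set B := a11 * a22 - (r * r + m * m) + m ^ 2 with hB
  have hBp : 0 < B := by positivity
  set c := ((a11 * a22 - (r * r + m * m)) / B) * QR a11 a22 ⟨r, m⟩ y1 y2 with hc
  have hsp : 0 < √a11 := Real.sqrt_pos.2 ha11
  have hsB : 0 < √B := Real.sqrt_pos.2 hBp
  have ep : √a11 ^ 2 = a11 := Real.sq_sqrt ha11.le
  have eB : √B ^ 2 = B := Real.sq_sqrt hBp.le
  obtain ⟨r1, r2⟩ := radial_cov c F hF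
  set X1 := -m / B * (a22 * y2 + r * y1) with hX1
  set X2 := m / B * (r * y2 + a11 * y1) with hX2
  obtain ⟨s1, s2⟩ := affine_cov (√a11) (r / √a11) (√B / √a11)
    (-(√a11 * X1 + r / √a11 * X2)) (-(√B / √a11 * X2)) hsp (by positivity) _ r1
  have key : ∀ x : ℝ × ℝ, Qw a11 a22 ⟨r, m⟩ y1 y2 x =
      c + ((√a11 * x.1 + r / √a11 * x.2 + -(√a11 * X1 + r / √a11 * X2)) ^ 2 +
        (√B / √a11 * x.2 + -(√B / √a11 * X2)) ^ 2) := by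
    rintro ⟨x1, x2⟩
    have e1 : (√a11 * x1 + r / √a11 * x2 + -(√a11 * X1 + r / √a11 * X2)) ^ 2 =
        a11 * (x1 - X1) ^ 2 + 2 * r * (x1 - X1) * (x2 - X2) + r ^ 2 / a11 * (x2 - X2) ^ 2 := by
      rw [← ep, Real.sqrt_sq hsp.le]
      field_simp
      ring
    have e2 : (√B / √a11 * x2 + -(√B / √a11 * X2)) ^ 2 = B / a11 * (x2 - X2) ^ 2 := by
      have : (√B / √a11 * x2 + -(√B / √a11 * X2)) ^ 2
        = √B ^ 2 / √a11 ^ 2 * (x2 - X2) ^ 2 := by field_simp; ring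
      rw [this, ep, eB]
    have e3 : r ^ 2 / a11 * (x2 - X2) ^ 2 + B / a11 * (x2 - X2) ^ 2 = a22 * (x2 - X2) ^ 2 := by
      rw [hB]; field_simp; ring
    have e4 : Qw a11 a22 ⟨r, m⟩ y1 y2 (x1, x2) = c + (a11 * (x1 - X1) ^ 2
        + 2 * r * (x1 - X1) * (x2 - X2) + a22 * (x2 - X2) ^ 2) := by
      have hBr : a11 * a22 = B + r ^ 2 := by rw [hB]; ring
      have hQ : Qw a11 a22 ⟨r, m⟩ y1 y2 (x1, x2) = a11 * (x1 ^ 2 + y1 ^ 2)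
          + a22 * (x2 ^ 2 + y2 ^ 2)
          + 2 * (r * (x1 * x2 + y1 * y2) - m * (y1 * x2 - x1 * y2)) := by
        simp [Qw, Qh, Complex.normSq_apply]
        ring
      rw [hQ, hc, hX1, hX2]
      simp only [QR]
      clear_value B
      have hA' : a11 * a22 - (r * r + m * m) = B - m ^ 2 := by rw [hBr]; ring
      rw [hA']
      field_simp
      have ha : a22 = (B + r ^ 2) / a11 := by rw [← hBr]; field_simp
      rw [ha]
      field_simp
      ring
    simp only
    rw [e1, e2, e4]
    linarith
  have hpw : √a11 * (√B / √a11) = √B := by field_simp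
  have hfun : (fun x => F (Qw a11 a22 ⟨r, m⟩ y1 y2 x)) = _ := funext fun x => congrArg F (key x)
  rw [hfun]
  refine ⟨s1, ?_⟩
  rw [s2, r2, hpw]
  ring

lemma QR_pos (a11 a22 : ℝ) (a12 : ℂ) (ha11 : 0 < a11)
    (hA : 0 < a11 * a22 - Complex.normSq a12) (y1 y2 : ℝ) (hy : ¬(y1 = 0 ∧ y2 = 0)) :
    0 < QR a11 a22 a12 y1 y2 := by
  obtain ⟨r, m⟩ := a12
  simp only [Complex.normSq_mk] at hA
  simp only [QR]
  have hB : 0 < a11 * a22 - r ^ 2 := by nlinarith [sq_nonneg m]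
  have e : a11 * (a11 * y1 ^ 2 + 2 * r * y1 * y2 + a22 * y2 ^ 2) =
    (a11 * y1 + r * y2) ^ 2 + (a11 * a22 - r ^ 2) * y2 ^ 2 := by ring
  refine pos_of_mul_pos_right (a := a11) ?_ ha11.le
  rw [e]
  by_cases h2 : y2 = 0
  · have h1 : y1 ≠ 0 := fun h => hy ⟨h, h2⟩
    subst h2
    have : 0 < (a11 * y1) ^ 2 := by positivity
    simpa using this
  · positivity

/-- the closed forms of the auxiliary integrals `I₀₁`, `I₀₂`, `I₀₃`:
with `c = (A/𝔸)Qℝ(y)` and `ϱ = √(c + Aμ²)`,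
`I₀₁ = (π/√𝔸)∫_c^∞ ds/(s(s+Aμ²)^{3/2})`, `I₀₂ = −I₀₁/2 + π√𝔸/(Aϱ·Qℝ(y))`,
`I₀₃ = π√𝔸/(A·Qℝ(y))`. -/
theorem statement15 (a11 a22 : ℝ) (a12 : ℂ) (ha11 : 0 < a11) (ha22 : 0 < a22)
    (hA : 0 < a11 * a22 - Complex.normSq a12) (y1 y2 μ : ℝ) (hy : ¬(y1 = 0 ∧ y2 = 0)) :
    (Integrable (fun x : ℝ × ℝ => (Qw a11 a22 a12 y1 y2 x *
        (Qw a11 a22 a12 y1 y2 x + (a11 * a22 - Complex.normSq a12) * μ ^ 2)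
          ^ ((3 : ℝ) / 2))⁻¹) ∧
      IntegrableOn (fun s : ℝ =>
          (s * (s + (a11 * a22 - Complex.normSq a12) * μ ^ 2) ^ ((3 : ℝ) / 2))⁻¹)
        (Set.Ioi (((a11 * a22 - Complex.normSq a12) /
          (a11 * a22 - Complex.normSq a12 + a12.im ^ 2)) * QR a11 a22 a12 y1 y2)) ∧
      (∫ x : ℝ × ℝ, (Qw a11 a22 a12 y1 y2 x *
        (Qw a11 a22 a12 y1 y2 x + (a11 * a22 - Complex.normSq a12) * μ ^ 2)
          ^ ((3 : ℝ) / 2))⁻¹)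
        = (Real.pi / Real.sqrt (a11 * a22 - Complex.normSq a12 + a12.im ^ 2)) *
          ∫ s in Set.Ioi (((a11 * a22 - Complex.normSq a12) /
              (a11 * a22 - Complex.normSq a12 + a12.im ^ 2)) * QR a11 a22 a12 y1 y2),
            (s * (s + (a11 * a22 - Complex.normSq a12) * μ ^ 2) ^ ((3 : ℝ) / 2))⁻¹) ∧
    (Integrable (fun x : ℝ × ℝ => (Qw a11 a22 a12 y1 y2 x ^ 2 *
        (Qw a11 a22 a12 y1 y2 x + (a11 * a22 - Complex.normSq a12) * μ ^ 2)
          ^ ((1 : ℝ) / 2))⁻¹) ∧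
      (∫ x : ℝ × ℝ, (Qw a11 a22 a12 y1 y2 x ^ 2 *
        (Qw a11 a22 a12 y1 y2 x + (a11 * a22 - Complex.normSq a12) * μ ^ 2)
          ^ ((1 : ℝ) / 2))⁻¹)
        = -(1 / 2) * (∫ x : ℝ × ℝ, (Qw a11 a22 a12 y1 y2 x *
            (Qw a11 a22 a12 y1 y2 x + (a11 * a22 - Complex.normSq a12) * μ ^ 2)
              ^ ((3 : ℝ) / 2))⁻¹)
          + Real.pi * Real.sqrt (a11 * a22 - Complex.normSq a12 + a12.im ^ 2) /
            ((a11 * a22 - Complex.normSq a12) *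
              Real.sqrt (((a11 * a22 - Complex.normSq a12) /
                  (a11 * a22 - Complex.normSq a12 + a12.im ^ 2)) * QR a11 a22 a12 y1 y2
                + (a11 * a22 - Complex.normSq a12) * μ ^ 2) *
              QR a11 a22 a12 y1 y2)) ∧
    (Integrable (fun x : ℝ × ℝ => (Qw a11 a22 a12 y1 y2 x ^ 2)⁻¹) ∧
      (∫ x : ℝ × ℝ, (Qw a11 a22 a12 y1 y2 x ^ 2)⁻¹)
        = Real.pi * Real.sqrt (a11 * a22 - Complex.normSq a12 + a12.im ^ 2) /
            ((a11 * a22 - Complex.normSq a12) * QR a11 a22 a12 y1 y2)) := by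
  have hQ := QR_pos a11 a22 a12 ha11 hA y1 y2 hy
  have hcov := Qw_cov a11 a22 a12 ha11 hA y1 y2
  set A := a11 * a22 - Complex.normSq a12 with hAdef
  have hB : 0 < A + a12.im ^ 2 := by positivity
  set B := A + a12.im ^ 2 with hBdef
  set q := QR a11 a22 a12 y1 y2 with hq
  have hc : 0 < A / B * q := by positivity
  have hK : 0 ≤ A * μ ^ 2 := by positivity
  have hsB : 0 < √B := Real.sqrt_pos.2 hB
  have eB : √B ^ 2 = B := Real.sq_sqrt hB.le
  obtain ⟨i1, i2, e12⟩ := Fint12 _ _ hc hK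
  obtain ⟨i3, e3⟩ := Fint3 _ hc
  obtain ⟨j1, f1⟩ := hcov _ i1
  obtain ⟨j2, f2⟩ := hcov _ i2
  obtain ⟨j3, f3⟩ := hcov _ i3
  refine ⟨⟨j1, i1, f1⟩, ⟨j2, ?_⟩, ⟨j3, ?_⟩⟩
  · rw [f2, f1, e12]
    have hρ : 0 < √(A / B * q + A * μ ^ 2) := Real.sqrt_pos.2 (by linarith)
    have e : Real.pi / √B * (A / B * q * √(A / B * q + A * μ ^ 2))⁻¹ =
        Real.pi * √B / (A * √(A / B * q + A * μ ^ 2) * q) := by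
      generalize √(A / B * q + A * μ ^ 2) = t at *
      have : A / B * q = A / √B ^ 2 * q := by rw [eB]
      rw [this]
      field_simp
    rw [← e]
    ring
  · rw [f3, e3]
    have : A / B * q = A / √B ^ 2 * q := by rw [eB]
    rw [this]
    field_simp
end

section
/- For every C₀ ≥ 1 there are constants c > 0 and C > 0 with the following property (leading asymptote of the Green integral of a codimension-3 graphical submanifold of ℝ⁵). Let f₃, f₄, f₅ : ℝ² → ℝ be twice continuously differentiable on the closed unit ball with |fᵢ|, |Dfᵢ|, |D²fᵢ| ≤ C₀ there, let h(σ) = (σ₁, σ₂, f₃(σ), f₄(σ), f₅(σ)), and let f : ℝ² → ℝ satisfy |f|, |Df|, |D²f| ≤ C₀ on the closed unit ball. Fix σ₀ ∈ ℝ² with |σ₀| ≤ 1/2 and mutually orthonormal vectors n₁, n₂, n₃ ∈ ℝ⁵ each orthogonal to ∂₁h(σ₀) and ∂₂h(σ₀). Then for every t = (t₁, t₂, t₃) ∈ ℝ³ with 0 < |t| ≤ c, setting s = h(σ₀) + t₁n₁ + t₂n₂ + t₃n₃, the integral I_{Γ,f}(s) = −(1/(8π²)) ∫_{|σ|<1}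 f(σ)·|s − h(σ)|^{−3}·√(det G(σ)) dσ converges, where G(σ) is the 2×2 Gram matrix with entries ⟨∂ᵢh(σ), ∂ⱼh(σ)⟩, and | I_{Γ,f}(s) + f(σ₀)/(4π|t|) | ≤ C. -/
open MeasureTheory
open scoped RealInnerProductSpace

/-- The graph map `h(σ) = (σ₁, σ₂, f₃(σ), f₄(σ), f₅(σ)) ∈ ℝ⁵`. -/
noncomputable def graphMap (f3 f4 f5 : EuclideanSpace ℝ (Fin 2) → ℝ)
    (σ : EuclideanSpace ℝ (Fin 2)) : EuclideanSpace ℝ (Fin 5) :=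
  (WithLp.equiv 2 (Fin 5 → ℝ)).symm ![σ 0, σ 1, f3 σ, f4 σ, f5 σ]

/-- The determinant of the 2×2 Gram matrix `G(σ)` of the tangent vectors `∂ᵢh(σ)`. -/
noncomputable def gramDet (f3 f4 f5 : EuclideanSpace ℝ (Fin 2) → ℝ)
    (σ : EuclideanSpace ℝ (Fin 2)) : ℝ :=
  ⟪fderiv ℝ (graphMap f3 f4 f5) σ (EuclideanSpace.single 0 1),
      fderiv ℝ (graphMap f3 f4 f5) σ (EuclideanSpace.single 0 1)⟫ *
    ⟪fderiv ℝ (graphMap f3 f4 f5) σ (EuclideanSpace.single 1 1),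
      fderiv ℝ (graphMap f3 f4 f5) σ (EuclideanSpace.single 1 1)⟫ -
  ⟪fderiv ℝ (graphMap f3 f4 f5) σ (EuclideanSpace.single 0 1),
      fderiv ℝ (graphMap f3 f4 f5) σ (EuclideanSpace.single 1 1)⟫ ^ 2

theorem g17_radial (g : ℝ → ℝ) (ρ : ℝ) (hρ : 0 < ρ) :
    ∫ y in Metric.ball (0 : EuclideanSpace ℝ (Fin 2)) ρ, g ‖y‖
      = 2 * Real.pi * ∫ r in (0:ℝ)..ρ, r * g r := by
  have h1 : ∫ y in Metric.ball (0 : EuclideanSpace ℝ (Fin 2)) ρ, g ‖y‖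
      = ∫ y : EuclideanSpace ℝ (Fin 2), (Set.Iio ρ).indicator g ‖y‖ := by
    rw [← integral_indicator Metric.isOpen_ball.measurableSet]
    congr 1
    ext y
    simp [Set.indicator, Metric.mem_ball]
  rw [h1, integral_fun_norm_addHaar volume ((Set.Iio ρ).indicator g)]
  have h2 : ∫ y in Set.Ioi (0:ℝ), y ^ (Module.finrank ℝ (EuclideanSpace ℝ (Fin 2)) - 1) •
      (Set.Iio ρ).indicator g y = ∫ r in (0:ℝ)..ρ, r * g r := by
    rw [intervalIntegral.integral_of_le hρ.le, integral_Ioc_eq_integral_Ioo]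
    have : ∀ y : ℝ, y ^ (Module.finrank ℝ (EuclideanSpace ℝ (Fin 2)) - 1) •
      (Set.Iio ρ).indicator g y = (Set.Iio ρ).indicator (fun r => r * g r) y := by
      intro y
      simp [Set.indicator]
    simp_rw [this]
    rw [setIntegral_indicator measurableSet_Iio, Set.Ioi_inter_Iio]
  rw [h2]
  have h3 : (volume : Measure (EuclideanSpace ℝ (Fin 2))).real (Metric.ball 0 1) = Real.pi := by
    simp [Measure.real, EuclideanSpace.volume_ball_fin_two, Real.pi_nonneg]
  rw [h3]
  simp [mul_assoc]

theorem g17_cont (T : ℝ) (hT : 0 < T) (n : ℕ) :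
    Continuous (fun r : ℝ => (Real.sqrt (T ^ 2 + r ^ 2) ^ n)⁻¹) := by
  refine Continuous.inv₀ (by fun_prop) (fun r => ?_)
  positivity

theorem g17_hasDeriv (T : ℝ) (hT : 0 < T) (r : ℝ) :
    HasDerivAt (fun r : ℝ => Real.sqrt (T ^ 2 + r ^ 2)) (r * (Real.sqrt (T ^ 2 + r ^ 2))⁻¹) r := by
  have h : HasDerivAt (fun r : ℝ => T ^ 2 + r ^ 2) (2 * r) r := by
    simpa using (hasDerivAt_pow 2 r).const_add (T ^ 2)
  have := h.sqrt (by positivity)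
  convert this using 1
  field_simp

theorem g17_J3 (T ρ : ℝ) (hT : 0 < T) (hρ : 0 < ρ) :
    ∫ y in Metric.ball (0 : EuclideanSpace ℝ (Fin 2)) ρ, (Real.sqrt (T ^ 2 + ‖y‖ ^ 2) ^ 3)⁻¹
      = 2 * Real.pi * (1 / T - 1 / Real.sqrt (T ^ 2 + ρ ^ 2)) := by
  rw [g17_radial (fun r => (Real.sqrt (T ^ 2 + r ^ 2) ^ 3)⁻¹) ρ hρ]
  congr 1
  rw [intervalIntegral.integral_eq_sub_of_hasDerivAt
    (f := fun r => - (Real.sqrt (T ^ 2 + r ^ 2))⁻¹)]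
  · simp [Real.sqrt_sq hT.le]
    ring
  · intro r _
    have hq : 0 < Real.sqrt (T ^ 2 + r ^ 2) := by positivity
    have := ((g17_hasDeriv T hT r).inv hq.ne').neg
    have e : r * (Real.sqrt (T ^ 2 + r ^ 2) ^ 3)⁻¹ =
        -(-(r * (Real.sqrt (T ^ 2 + r ^ 2))⁻¹) / Real.sqrt (T ^ 2 + r ^ 2) ^ 2) := by
      field_simp
    rw [e]
    exact this
  · exact (continuous_id.mul (g17_cont T hT 3)).intervalIntegrable _ _

theorem g17_J1 (T ρ : ℝ) (hT : 0 < T) (hρ : 0 < ρ) :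
    ∫ y in Metric.ball (0 : EuclideanSpace ℝ (Fin 2)) ρ, (Real.sqrt (T ^ 2 + ‖y‖ ^ 2))⁻¹
      = 2 * Real.pi * (Real.sqrt (T ^ 2 + ρ ^ 2) - T) := by
  rw [g17_radial (fun r => (Real.sqrt (T ^ 2 + r ^ 2))⁻¹) ρ hρ]
  congr 1
  rw [intervalIntegral.integral_eq_sub_of_hasDerivAt
    (f := fun r => (Real.sqrt (T ^ 2 + r ^ 2)))]
  · simp [Real.sqrt_sq hT.le]
  · intro r _
    exact g17_hasDeriv T hT r
  · have h1 := g17_cont T hT 1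
    simp only [pow_one] at h1
    exact (continuous_id.mul h1).intervalIntegrable 0 ρ

theorem g17_intOn (g : EuclideanSpace ℝ (Fin 2) → ℝ) (hg : Continuous g) (ρ : ℝ) :
    IntegrableOn g (Metric.ball (0 : EuclideanSpace ℝ (Fin 2)) ρ) :=
  (hg.continuousOn.integrableOn_compact (isCompact_closedBall 0 ρ)).mono_set
    Metric.ball_subset_closedBall

theorem g17_cont2 (T : ℝ) (hT : 0 < T) (n : ℕ) :
    Continuous (fun y : EuclideanSpace ℝ (Fin 2) => (Real.sqrt (T ^ 2 + ‖y‖ ^ 2) ^ n)⁻¹) :=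
  (g17_cont T hT n).comp continuous_norm

theorem g17_odd (T ρ : ℝ) (l : EuclideanSpace ℝ (Fin 2) →L[ℝ] ℝ) :
    ∫ y in Metric.ball (0 : EuclideanSpace ℝ (Fin 2)) ρ,
      l y * (Real.sqrt (T ^ 2 + ‖y‖ ^ 2) ^ 3)⁻¹ = 0 := by
  rw [← integral_indicator Metric.isOpen_ball.measurableSet]
  set F := (Metric.ball (0 : EuclideanSpace ℝ (Fin 2)) ρ).indicator
    fun y => l y * (Real.sqrt (T ^ 2 + ‖y‖ ^ 2) ^ 3)⁻¹ with hF
  have h1 : ∫ y, F (-y) = ∫ y, F y := integral_neg_eq_self F volume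
  have h2 : ∀ y, F (-y) = - F y := by
    intro y
    simp only [hF, Set.indicator, Metric.mem_ball, dist_zero_right, norm_neg, map_neg]
    split_ifs <;> simp
  simp_rw [h2] at h1
  rw [integral_neg] at h1
  linarith

theorem g17_core (U : Set (EuclideanSpace ℝ (Fin 2))) (hU : MeasurableSet U)
    (ψ : EuclideanSpace ℝ (Fin 2) → EuclideanSpace ℝ (Fin 2))
    (ψ' : EuclideanSpace ℝ (Fin 2) → EuclideanSpace ℝ (Fin 2) →L[ℝ] EuclideanSpace ℝ (Fin 2))
    (hψ : ∀ x ∈ U, HasFDerivWithinAt ψ (ψ' x) U x) (hinj : Set.InjOn ψ U)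
    (T ρ : ℝ) (hT : 0 < T) (hρ : 0 < ρ) (himg : ψ '' U = Metric.ball 0 ρ)
    (Φ : EuclideanSpace ℝ (Fin 2) → ℝ) (hΦ : IntegrableOn Φ U)
    (f0 : ℝ) (l : EuclideanSpace ℝ (Fin 2) →L[ℝ] ℝ) (K : ℝ) (hK : 0 ≤ K)
    (hb : ∀ x ∈ U, |Φ x - |(ψ' x).det| *
        ((f0 + l (ψ x)) * (Real.sqrt (T ^ 2 + ‖ψ x‖ ^ 2) ^ 3)⁻¹)| ≤
      |(ψ' x).det| * (K * (T * (Real.sqrt (T ^ 2 + ‖ψ x‖ ^ 2) ^ 3)⁻¹ +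
        (Real.sqrt (T ^ 2 + ‖ψ x‖ ^ 2))⁻¹))) :
    |(∫ x in U, Φ x) - f0 * (2 * Real.pi / T)| ≤
      |f0| * (2 * Real.pi / ρ) + K * (2 * Real.pi + 2 * Real.pi * ρ) := by
  set m : EuclideanSpace ℝ (Fin 2) → ℝ := fun y =>
    (f0 + l y) * (Real.sqrt (T ^ 2 + ‖y‖ ^ 2) ^ 3)⁻¹ with hm
  set e : EuclideanSpace ℝ (Fin 2) → ℝ := fun y =>
    K * (T * (Real.sqrt (T ^ 2 + ‖y‖ ^ 2) ^ 3)⁻¹ + (Real.sqrt (T ^ 2 + ‖y‖ ^ 2))⁻¹) with he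
  have c3 := g17_cont2 T hT 3
  have c1 : Continuous (fun y : EuclideanSpace ℝ (Fin 2) => (Real.sqrt (T ^ 2 + ‖y‖ ^ 2))⁻¹) := by
    simpa using g17_cont2 T hT 1
  have cm : Continuous m := (continuous_const.add l.continuous).mul c3
  have ce : Continuous e := continuous_const.mul ((continuous_const.mul c3).add c1)
  have im := g17_intOn m cm ρ
  have ie := g17_intOn e ce ρ
  have im' := im
  have ie' := ie
  rw [← himg, integrableOn_image_iff_integrableOn_abs_det_fderiv_smul volume hU hψ hinj] at im' ie'
  have em := integral_image_eq_integral_abs_det_fderiv_smul volume hU hψ hinj m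
  have ee := integral_image_eq_integral_abs_det_fderiv_smul volume hU hψ hinj e
  rw [himg] at em ee
  have vm : ∫ y in Metric.ball (0 : EuclideanSpace ℝ (Fin 2)) ρ, m y =
      f0 * (2 * Real.pi * (1 / T - 1 / Real.sqrt (T ^ 2 + ρ ^ 2))) := by
    simp only [hm, add_mul]
    rw [integral_add, integral_const_mul, g17_J3 T ρ hT hρ, g17_odd, add_zero]
    · exact g17_intOn _ (continuous_const.mul c3) ρ
    · exact g17_intOn _ (l.continuous.mul c3) ρ
  have ve : ∫ y in Metric.ball (0 : EuclideanSpace ℝ (Fin 2)) ρ, e y =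
      K * (T * (2 * Real.pi * (1 / T - 1 / Real.sqrt (T ^ 2 + ρ ^ 2))) +
        2 * Real.pi * (Real.sqrt (T ^ 2 + ρ ^ 2) - T)) := by
    simp only [he]
    rw [integral_const_mul, integral_add, integral_const_mul, g17_J3 T ρ hT hρ, g17_J1 T ρ hT hρ]
    · exact g17_intOn _ (continuous_const.mul c3) ρ
    · exact g17_intOn _ c1 ρ
  have key : |(∫ x in U, Φ x) - ∫ y in Metric.ball (0 : EuclideanSpace ℝ (Fin 2)) ρ, m y| ≤
      ∫ y in Metric.ball (0 : EuclideanSpace ℝ (Fin 2)) ρ, e y := by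
    rw [em, ee, ← integral_sub hΦ im', ← Real.norm_eq_abs]
    refine norm_integral_le_of_norm_le ie' ?_
    refine (ae_restrict_iff' hU).2 (Filter.Eventually.of_forall fun x hx => ?_)
    simpa [hm, he, Real.norm_eq_abs] using hb x hx
  rw [vm, ve] at key
  have hpi := Real.pi_pos
  set R := Real.sqrt (T ^ 2 + ρ ^ 2) with hR
  have hRρ : ρ ≤ R := by
    rw [hR]; exact Real.le_sqrt_of_sq_le (by nlinarith)
  have hRT : R ≤ T + ρ := by
    rw [hR]; exact Real.sqrt_le_iff.2 ⟨by positivity, by nlinarith⟩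
  have hR0 : 0 < R := lt_of_lt_of_le hρ hRρ
  have h1R : 1 / R ≤ 1 / ρ := one_div_le_one_div_of_le hρ hRρ
  have a1 : T * (2 * Real.pi * (1 / T - 1 / R)) ≤ 2 * Real.pi := by
    have : T * (2 * Real.pi * (1 / T - 1 / R)) = 2 * Real.pi - 2 * Real.pi * (T / R) := by
      field_simp
    rw [this]
    have : 0 ≤ 2 * Real.pi * (T / R) := by positivity
    linarith
  have a2 : 2 * Real.pi * (R - T) ≤ 2 * Real.pi * ρ := by
    apply mul_le_mul_of_nonneg_left _ (by positivity); linarith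
  have a3 : |f0 * (2 * Real.pi * (1 / T - 1 / R)) - f0 * (2 * Real.pi / T)| ≤
      |f0| * (2 * Real.pi / ρ) := by
    have : f0 * (2 * Real.pi * (1 / T - 1 / R)) - f0 * (2 * Real.pi / T) =
      - (f0 * (2 * Real.pi * (1 / R))) := by ring
    rw [this, abs_neg, abs_mul, abs_of_nonneg (by positivity : 0 ≤ 2 * Real.pi * (1 / R))]
    apply mul_le_mul_of_nonneg_left _ (abs_nonneg _)
    calc 2 * Real.pi * (1 / R) ≤ 2 * Real.pi * (1 / ρ) := by gcongr
      _ = 2 * Real.pi / ρ := by ring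
  have a4 := mul_le_mul_of_nonneg_left (add_le_add a1 a2) hK
  have a5 := abs_sub_le (∫ x in U, Φ x) (f0 * (2 * Real.pi * (1 / T - 1 / R)))
    (f0 * (2 * Real.pi / T))
  linarith


theorem g17_C2 (C₀ : ℝ) (g : EuclideanSpace ℝ (Fin 2) → ℝ)
    (hg : ContDiffOn ℝ 2 g (Metric.closedBall 0 1))
    (hb : ∀ σ ∈ Metric.closedBall (0 : EuclideanSpace ℝ (Fin 2)) 1, ∀ k : ℕ, k ≤ 2 →
      ‖iteratedFDerivWithin ℝ k g (Metric.closedBall 0 1) σ‖ ≤ C₀) :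
    (∀ σ ∈ Metric.ball (0 : EuclideanSpace ℝ (Fin 2)) 1, |g σ| ≤ C₀ ∧
      HasFDerivAt g (fderiv ℝ g σ) σ ∧ ‖fderiv ℝ g σ‖ ≤ C₀ ∧
      ∀ τ ∈ Metric.ball (0 : EuclideanSpace ℝ (Fin 2)) 1,
        ‖fderiv ℝ g σ - fderiv ℝ g τ‖ ≤ C₀ * ‖σ - τ‖) := by
  set S := Metric.closedBall (0 : EuclideanSpace ℝ (Fin 2)) 1 with hS
  have hu : UniqueDiffOn ℝ S := uniqueDiffOn_convex (convex_closedBall _ _) (by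
    rw [hS, interior_closedBall _ one_ne_zero]; exact ⟨0, by simp⟩)
  have hd : DifferentiableOn ℝ (fderivWithin ℝ g S) S :=
    (hg.fderivWithin hu (m := 1) (by norm_num)).differentiableOn (by norm_num)
  have hnhds : ∀ σ ∈ Metric.ball (0 : EuclideanSpace ℝ (Fin 2)) 1, S ∈ nhds σ := fun σ hσ =>
    Filter.mem_of_superset (Metric.isOpen_ball.mem_nhds hσ) Metric.ball_subset_closedBall
  have heq : ∀ σ ∈ Metric.ball (0 : EuclideanSpace ℝ (Fin 2)) 1,
      fderivWithin ℝ g S σ = fderiv ℝ g σ := fun σ hσ => fderivWithin_of_mem_nhds (hnhds σ hσ)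
  intro σ hσ
  have hσS : σ ∈ S := Metric.ball_subset_closedBall hσ
  refine ⟨?_, ?_, ?_, ?_⟩
  · have := hb σ hσS 0 (by norm_num)
    rwa [norm_iteratedFDerivWithin_zero] at this
  · exact ((hg.contDiffAt (hnhds σ hσ)).differentiableAt (by norm_num)).hasFDerivAt
  · have := hb σ hσS 1 (by norm_num)
    rwa [norm_iteratedFDerivWithin_one _ (hu σ hσS), heq σ hσ] at this
  · intro τ hτ
    have hτS : τ ∈ S := Metric.ball_subset_closedBall hτ
    rw [← heq σ hσ, ← heq τ hτ]
    refine (convex_closedBall _ _).norm_image_sub_le_of_norm_fderivWithin_le hd (fun x hx => ?_)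
      hτS hσS
    have := hb x hx 2 le_rfl
    rwa [← norm_iteratedFDerivWithin_fderivWithin hu hx,
      norm_iteratedFDerivWithin_one _ (hu x hx)] at this

theorem g17_taylor {F : Type*} [NormedAddCommGroup F] [NormedSpace ℝ F]
    (g : EuclideanSpace ℝ (Fin 2) → F) (g' : EuclideanSpace ℝ (Fin 2) →
      EuclideanSpace ℝ (Fin 2) →L[ℝ] F) (K : ℝ) (hK : 0 ≤ K)
    (hg : ∀ σ ∈ Metric.ball (0 : EuclideanSpace ℝ (Fin 2)) 1, HasFDerivAt g (g' σ) σ)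
    (hL : ∀ σ ∈ Metric.ball (0 : EuclideanSpace ℝ (Fin 2)) 1,
      ∀ τ ∈ Metric.ball (0 : EuclideanSpace ℝ (Fin 2)) 1, ‖g' σ - g' τ‖ ≤ K * ‖σ - τ‖)
    (σ₀ σ : EuclideanSpace ℝ (Fin 2)) (h0 : σ₀ ∈ Metric.ball (0 : EuclideanSpace ℝ (Fin 2)) 1)
    (h1 : σ ∈ Metric.ball (0 : EuclideanSpace ℝ (Fin 2)) 1) :
    ‖g σ - g σ₀ - g' σ₀ (σ - σ₀)‖ ≤ K * ‖σ - σ₀‖ ^ 2 := by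
  have hc : Convex ℝ (Metric.ball (0 : EuclideanSpace ℝ (Fin 2)) 1 ∩
      Metric.closedBall σ₀ ‖σ - σ₀‖) := (convex_ball _ _).inter (convex_closedBall _ _)
  have := hc.norm_image_sub_le_of_norm_hasFDerivWithin_le' (f := g) (f' := g') (φ := g' σ₀)
    (C := K * ‖σ - σ₀‖) (x := σ₀) (y := σ) (fun x hx => (hg x hx.1).hasFDerivWithinAt)
    (fun x hx => (hL x hx.1 σ₀ h0).trans (mul_le_mul_of_nonneg_left
      (by simpa [dist_eq_norm] using hx.2) hK)) ⟨h0, by simp⟩ ⟨h1, by simp [dist_eq_norm]⟩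
  calc _ ≤ _ := this
    _ = _ := by ring

/-- Inclusion of the plane as the first two coordinates. -/
noncomputable def g17_P : EuclideanSpace ℝ (Fin 2) →L[ℝ] EuclideanSpace ℝ (Fin 5) :=
  (EuclideanSpace.proj 0).smulRight (EuclideanSpace.single 0 1) +
  (EuclideanSpace.proj 1).smulRight (EuclideanSpace.single 1 1)

/-- The derivative of the graph map. -/
noncomputable def g17_H (f3 f4 f5 : EuclideanSpace ℝ (Fin 2) → ℝ)
    (σ : EuclideanSpace ℝ (Fin 2)) : EuclideanSpace ℝ (Fin 2) →L[ℝ] EuclideanSpace ℝ (Fin 5) :=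
  g17_P + (fderiv ℝ f3 σ).smulRight (EuclideanSpace.single 2 1) +
    (fderiv ℝ f4 σ).smulRight (EuclideanSpace.single 3 1) +
    (fderiv ℝ f5 σ).smulRight (EuclideanSpace.single 4 1)

theorem g17_graph_eq (f3 f4 f5 : EuclideanSpace ℝ (Fin 2) → ℝ) :
    graphMap f3 f4 f5 = fun σ => g17_P σ + f3 σ • EuclideanSpace.single 2 (1:ℝ) +
      f4 σ • EuclideanSpace.single 3 (1:ℝ) + f5 σ • EuclideanSpace.single 4 (1:ℝ) := by
  funext σ
  ext i
  fin_cases i <;> simp [graphMap, g17_P]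

theorem g17_graph_deriv (f3 f4 f5 : EuclideanSpace ℝ (Fin 2) → ℝ) (σ : EuclideanSpace ℝ (Fin 2))
    (h3 : HasFDerivAt f3 (fderiv ℝ f3 σ) σ) (h4 : HasFDerivAt f4 (fderiv ℝ f4 σ) σ)
    (h5 : HasFDerivAt f5 (fderiv ℝ f5 σ) σ) :
    HasFDerivAt (graphMap f3 f4 f5) (g17_H f3 f4 f5 σ) σ := by
  rw [g17_graph_eq]
  exact ((g17_P.hasFDerivAt.add (h3.smul_const _)).add (h4.smul_const _)).add (h5.smul_const _)

theorem g17_P_norm : ‖g17_P‖ ≤ 1 := by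
  refine ContinuousLinearMap.opNorm_le_bound _ zero_le_one (fun u => ?_)
  rw [one_mul, EuclideanSpace.norm_eq, EuclideanSpace.norm_eq]
  apply Real.sqrt_le_sqrt
  simp [Fin.sum_univ_succ, g17_P]

theorem g17_H_norm (f3 f4 f5 : EuclideanSpace ℝ (Fin 2) → ℝ) (σ : EuclideanSpace ℝ (Fin 2))
    (C₀ : ℝ) (h3 : ‖fderiv ℝ f3 σ‖ ≤ C₀) (h4 : ‖fderiv ℝ f4 σ‖ ≤ C₀) (h5 : ‖fderiv ℝ f5 σ‖ ≤ C₀) :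
    ‖g17_H f3 f4 f5 σ‖ ≤ 1 + 3 * C₀ := by
  have a := g17_P_norm
  unfold g17_H
  refine (norm_add_le _ _).trans ?_
  have := (norm_add₃_le (a := g17_P) (b := (fderiv ℝ f3 σ).smulRight (EuclideanSpace.single (2 : Fin 5) (1:ℝ)))
    (c := (fderiv ℝ f4 σ).smulRight (EuclideanSpace.single (3 : Fin 5) (1:ℝ))))
  simp only [ContinuousLinearMap.norm_smulRight_apply, PiLp.norm_single, norm_one,
    mul_one] at this ⊢
  linarith

theorem g17_H_lip (f3 f4 f5 : EuclideanSpace ℝ (Fin 2) → ℝ) (σ τ : EuclideanSpace ℝ (Fin 2))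
    (C₀ : ℝ) (h3 : ‖fderiv ℝ f3 σ - fderiv ℝ f3 τ‖ ≤ C₀) (h4 : ‖fderiv ℝ f4 σ - fderiv ℝ f4 τ‖ ≤ C₀)
    (h5 : ‖fderiv ℝ f5 σ - fderiv ℝ f5 τ‖ ≤ C₀) :
    ‖g17_H f3 f4 f5 σ - g17_H f3 f4 f5 τ‖ ≤ 3 * C₀ := by
  have e : g17_H f3 f4 f5 σ - g17_H f3 f4 f5 τ =
      (fderiv ℝ f3 σ - fderiv ℝ f3 τ).smulRight (EuclideanSpace.single (2 : Fin 5) (1:ℝ)) +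
      (fderiv ℝ f4 σ - fderiv ℝ f4 τ).smulRight (EuclideanSpace.single (3 : Fin 5) (1:ℝ)) +
      (fderiv ℝ f5 σ - fderiv ℝ f5 τ).smulRight (EuclideanSpace.single (4 : Fin 5) (1:ℝ)) := by
    ext u
    simp [g17_H, sub_smul]
    ring
  rw [e]
  refine norm_add₃_le.trans ?_
  simp only [ContinuousLinearMap.norm_smulRight_apply, PiLp.norm_single, norm_one,
    mul_one]
  linarith

theorem g17_norm_first (v : EuclideanSpace ℝ (Fin 5)) (u : EuclideanSpace ℝ (Fin 2))
    (h0 : v 0 = u 0) (h1 : v 1 = u 1) : ‖u‖ ≤ ‖v‖ := by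
  rw [EuclideanSpace.norm_eq, EuclideanSpace.norm_eq]
  apply Real.sqrt_le_sqrt
  simp only [Fin.sum_univ_succ, Fin.sum_univ_zero, Real.norm_eq_abs, sq_abs]
  simp
  rw [h0, h1]
  nlinarith [sq_nonneg (v 2), sq_nonneg (v 3), sq_nonneg (v 4)]

theorem g17_H_coord (f3 f4 f5 : EuclideanSpace ℝ (Fin 2) → ℝ) (σ u : EuclideanSpace ℝ (Fin 2)) :
    g17_H f3 f4 f5 σ u 0 = u 0 ∧ g17_H f3 f4 f5 σ u 1 = u 1 := by
  simp [g17_H, g17_P]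

theorem g17_lagrange (b : OrthonormalBasis (Fin 5) ℝ (EuclideanSpace ℝ (Fin 5)))
    (v w : EuclideanSpace ℝ (Fin 5)) :
    ⟪v, v⟫ * ⟪w, w⟫ - ⟪v, w⟫ ^ 2 =
      (⟪b 0, v⟫ * ⟪b 1, w⟫ - ⟪b 1, v⟫ * ⟪b 0, w⟫) ^ 2 +
      (⟪b 0, v⟫ * ⟪b 2, w⟫ - ⟪b 2, v⟫ * ⟪b 0, w⟫) ^ 2 +
      (⟪b 0, v⟫ * ⟪b 3, w⟫ - ⟪b 3, v⟫ * ⟪b 0, w⟫) ^ 2 +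
      (⟪b 0, v⟫ * ⟪b 4, w⟫ - ⟪b 4, v⟫ * ⟪b 0, w⟫) ^ 2 +
      (⟪b 1, v⟫ * ⟪b 2, w⟫ - ⟪b 2, v⟫ * ⟪b 1, w⟫) ^ 2 +
      (⟪b 1, v⟫ * ⟪b 3, w⟫ - ⟪b 3, v⟫ * ⟪b 1, w⟫) ^ 2 +
      (⟪b 1, v⟫ * ⟪b 4, w⟫ - ⟪b 4, v⟫ * ⟪b 1, w⟫) ^ 2 +
      (⟪b 2, v⟫ * ⟪b 3, w⟫ - ⟪b 3, v⟫ * ⟪b 2, w⟫) ^ 2 +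
      (⟪b 2, v⟫ * ⟪b 4, w⟫ - ⟪b 4, v⟫ * ⟪b 2, w⟫) ^ 2 +
      (⟪b 3, v⟫ * ⟪b 4, w⟫ - ⟪b 4, v⟫ * ⟪b 3, w⟫) ^ 2 := by
  have e : ∀ x y : EuclideanSpace ℝ (Fin 5), ⟪x, y⟫ =
      ⟪b 0, x⟫ * ⟪b 0, y⟫ + ⟪b 1, x⟫ * ⟪b 1, y⟫ + ⟪b 2, x⟫ * ⟪b 2, y⟫ + ⟪b 3, x⟫ * ⟪b 3, y⟫ +
      ⟪b 4, x⟫ * ⟪b 4, y⟫ := by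
    intro x y
    rw [← b.sum_inner_mul_inner x y, Fin.sum_univ_five]
    simp only [real_inner_comm]
  rw [e v v, e w w, e v w]
  ring

theorem g17_normsq (b : OrthonormalBasis (Fin 5) ℝ (EuclideanSpace ℝ (Fin 5)))
    (v : EuclideanSpace ℝ (Fin 5)) :
    ‖v‖ ^ 2 = ⟪b 0, v⟫ ^ 2 + ⟪b 1, v⟫ ^ 2 + ⟪b 2, v⟫ ^ 2 + ⟪b 3, v⟫ ^ 2 + ⟪b 4, v⟫ ^ 2 := by
  rw [← b.sum_sq_inner_right v, Fin.sum_univ_five]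

theorem g17_gram_ge_one (v w : EuclideanSpace ℝ (Fin 5)) (hv0 : v 0 = 1) (hv1 : v 1 = 0)
    (hw0 : w 0 = 0) (hw1 : w 1 = 1) : 1 ≤ ⟪v, v⟫ * ⟪w, w⟫ - ⟪v, w⟫ ^ 2 := by
  rw [g17_lagrange (EuclideanSpace.basisFun (Fin 5) ℝ)]
  simp only [EuclideanSpace.basisFun_apply, EuclideanSpace.inner_single_left, hv0, hv1, hw0, hw1]
  simp only [map_one, one_mul, mul_one, mul_zero, sub_zero, one_pow, zero_mul]
  simp only [add_assoc]
  exact le_add_of_nonneg_right (by positivity)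

/-- Projection to the plane spanned by two vectors. -/
noncomputable def g17_Pi (e1 e2 : EuclideanSpace ℝ (Fin 5)) :
    EuclideanSpace ℝ (Fin 5) →L[ℝ] EuclideanSpace ℝ (Fin 2) :=
  (innerSL ℝ e1).smulRight (EuclideanSpace.single 0 1) +
  (innerSL ℝ e2).smulRight (EuclideanSpace.single 1 1)

theorem g17_Pi_normsq (e1 e2 v : EuclideanSpace ℝ (Fin 5)) :
    ‖g17_Pi e1 e2 v‖ ^ 2 = ⟪e1, v⟫ ^ 2 + ⟪e2, v⟫ ^ 2 := by
  rw [EuclideanSpace.norm_sq_eq]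
  simp [g17_Pi]

theorem g17_det (A : EuclideanSpace ℝ (Fin 2) →L[ℝ] EuclideanSpace ℝ (Fin 2)) :
    A.det = A (EuclideanSpace.single 0 1) 0 * A (EuclideanSpace.single 1 1) 1 -
      A (EuclideanSpace.single 0 1) 1 * A (EuclideanSpace.single 1 1) 0 := by
  rw [ContinuousLinearMap.det, ← LinearMap.det_toMatrix (EuclideanSpace.basisFun (Fin 2) ℝ).toBasis,
    Matrix.det_fin_two]
  simp [LinearMap.toMatrix_apply]
  ring

theorem g17_Pi_det (e1 e2 : EuclideanSpace ℝ (Fin 5))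
    (H : EuclideanSpace ℝ (Fin 2) →L[ℝ] EuclideanSpace ℝ (Fin 5)) :
    ((g17_Pi e1 e2).comp H).det = ⟪e1, H (EuclideanSpace.single 0 1)⟫ *
      ⟪e2, H (EuclideanSpace.single 1 1)⟫ - ⟪e2, H (EuclideanSpace.single 0 1)⟫ *
      ⟪e1, H (EuclideanSpace.single 1 1)⟫ := by
  rw [g17_det]
  simp [g17_Pi]

theorem g17_basis (n1 n2 n3 : EuclideanSpace ℝ (Fin 5)) (h1 : ‖n1‖ = 1) (h2 : ‖n2‖ = 1)
    (h3 : ‖n3‖ = 1) (h12 : ⟪n1, n2⟫ = 0) (h13 : ⟪n1, n3⟫ = 0) (h23 : ⟪n2, n3⟫ = 0) :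
    ∃ b : OrthonormalBasis (Fin 5) ℝ (EuclideanSpace ℝ (Fin 5)),
      b 2 = n1 ∧ b 3 = n2 ∧ b 4 = n3 := by
  have hor : Orthonormal ℝ (({2, 3, 4} : Set (Fin 5)).domRestrict ![0, 0, n1, n2, n3]) := by
    constructor
    · rintro ⟨i, rfl | rfl | rfl⟩ <;> simp_all
    · rintro ⟨i, rfl | rfl | rfl⟩ ⟨j, rfl | rfl | rfl⟩ hij <;> simp_all [real_inner_comm]
  obtain ⟨b, hb⟩ := hor.exists_orthonormalBasis_extension_of_card_eq (by simp)
  exact ⟨b, hb 2 (by simp), hb 3 (by simp), hb 4 (by simp)⟩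


theorem g17_inv3 (x q p T M : ℝ) (hq : 0 < q) (hx : q / 2 ≤ x) (hp : 0 ≤ p) (hpq : p ≤ q)
    (hT : 0 ≤ T) (hM : 0 ≤ M) (h : |x ^ 2 - q ^ 2| ≤ M * (T * p ^ 2 + p ^ 4)) :
    |(x ^ 3)⁻¹ - (q ^ 3)⁻¹| ≤ 12 * M * (T * (q ^ 3)⁻¹ + q⁻¹) := by
  have hx0 : 0 < x := by linarith
  have e1 : (x ^ 3)⁻¹ - (q ^ 3)⁻¹ =
      (q ^ 2 - x ^ 2) * ((q ^ 2 + q * x + x ^ 2) / ((q + x) * x ^ 3 * q ^ 3)) := by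
    have : q + x ≠ 0 := by positivity
    field_simp
    ring
  rw [e1, abs_mul, abs_sub_comm, abs_of_pos
    (by positivity : 0 < (q ^ 2 + q * x + x ^ 2) / ((q + x) * x ^ 3 * q ^ 3))]
  have e2 : (q ^ 2 + q * x + x ^ 2) / ((q + x) * x ^ 3 * q ^ 3) ≤ 12 / q ^ 5 := by
    rw [div_le_div_iff₀ (by positivity) (by positivity)]
    have a1 : q ^ 2 + q * x + x ^ 2 ≤ (q + x) * (q + x) := by nlinarith [mul_pos hq hx0]
    have a2 : q ^ 2 ≤ 4 * x ^ 2 := by nlinarith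
    have a3 : q ^ 2 * (q + x) ≤ 12 * x ^ 3 := by
      have : q + x ≤ 3 * x := by linarith
      calc q ^ 2 * (q + x) ≤ 4 * x ^ 2 * (3 * x) := by gcongr
        _ = 12 * x ^ 3 := by ring
    calc (q ^ 2 + q * x + x ^ 2) * q ^ 5 ≤ ((q + x) * (q + x)) * q ^ 5 := by gcongr
      _ = (q + x) * q ^ 3 * (q ^ 2 * (q + x)) := by ring
      _ ≤ (q + x) * q ^ 3 * (12 * x ^ 3) := by gcongr
      _ = _ := by ring
  have e3 : T * p ^ 2 + p ^ 4 ≤ T * q ^ 2 + q ^ 4 := by gcongr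
  calc |x ^ 2 - q ^ 2| * ((q ^ 2 + q * x + x ^ 2) / ((q + x) * x ^ 3 * q ^ 3))
      ≤ (M * (T * q ^ 2 + q ^ 4)) * (12 / q ^ 5) := by
        apply mul_le_mul (h.trans (mul_le_mul_of_nonneg_left e3 hM)) e2 (by positivity)
          (by positivity)
    _ = _ := by field_simp

theorem g17_err (K x q p T fσ g J fl : ℝ) (hK : 1 ≤ K) (hq : 0 < q)
    (hx : q / 2 ≤ x) (hp : 0 ≤ p) (hpq : p ≤ q) (hT : 0 ≤ T)
    (h : |x ^ 2 - q ^ 2| ≤ 48 * K ^ 2 * (T * p ^ 2 + p ^ 4))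
    (hf : |fσ| ≤ K) (hg : g ≤ K ^ 2) (hg0 : 0 ≤ g) (hgJ : |g - J| ≤ 144 * K ^ 4 * p ^ 2)
    (hJ : 1 / 2 ≤ J)
    (hfl : |fσ - fl| ≤ 8 * K ^ 2 * p ^ 2) :
    |fσ * (x ^ 3)⁻¹ * g - J * (fl * (q ^ 3)⁻¹)| ≤
      J * (1500 * K ^ 5 * (T * (q ^ 3)⁻¹ + q⁻¹)) := by
  have h3 := g17_inv3 x q p T (48 * K ^ 2) hq hx hp hpq hT (by positivity) h
  set W := T * (q ^ 3)⁻¹ + q⁻¹ with hW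
  have hpW : p ^ 2 * (q ^ 3)⁻¹ ≤ W := by
    have : p ^ 2 * (q ^ 3)⁻¹ ≤ q ^ 2 * (q ^ 3)⁻¹ := by gcongr
    have e : q ^ 2 * (q ^ 3)⁻¹ = q⁻¹ := by field_simp
    have : 0 ≤ T * (q ^ 3)⁻¹ := by positivity
    rw [hW]; linarith
  have hW0 : 0 ≤ W := by positivity
  have e : fσ * (x ^ 3)⁻¹ * g - J * (fl * (q ^ 3)⁻¹) =
      fσ * g * ((x ^ 3)⁻¹ - (q ^ 3)⁻¹) + fσ * (g - J) * (q ^ 3)⁻¹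
        + (fσ - fl) * J * (q ^ 3)⁻¹ := by ring
  rw [e]
  have b1 : |fσ * g * ((x ^ 3)⁻¹ - (q ^ 3)⁻¹)| ≤ K * K ^ 2 * (12 * (48 * K ^ 2) * W) := by
    rw [abs_mul, abs_mul, abs_of_nonneg hg0]
    gcongr
  have b2 : |fσ * (g - J) * (q ^ 3)⁻¹| ≤ K * (144 * K ^ 4) * W := by
    rw [abs_mul, abs_mul, abs_of_nonneg (by positivity : 0 ≤ (q ^ 3)⁻¹)]
    calc |fσ| * |g - J| * (q ^ 3)⁻¹ ≤ K * (144 * K ^ 4 * p ^ 2) * (q ^ 3)⁻¹ := by gcongr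
      _ = K * (144 * K ^ 4) * (p ^ 2 * (q ^ 3)⁻¹) := by ring
      _ ≤ _ := by gcongr
  have b3 : |(fσ - fl) * J * (q ^ 3)⁻¹| ≤ 8 * K ^ 2 * J * W := by
    rw [abs_mul, abs_mul, abs_of_nonneg (by positivity : 0 ≤ (q ^ 3)⁻¹),
      abs_of_nonneg (by linarith : 0 ≤ J)]
    calc |fσ - fl| * J * (q ^ 3)⁻¹ ≤ (8 * K ^ 2 * p ^ 2) * J * (q ^ 3)⁻¹ := by gcongr
      _ = 8 * K ^ 2 * J * (p ^ 2 * (q ^ 3)⁻¹) := by ring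
      _ ≤ _ := by gcongr
  have b4 : K ^ 5 * W ≤ 2 * J * (K ^ 5 * W) := by
    have : 0 ≤ K ^ 5 * W := by positivity
    nlinarith
  have b5 : 8 * K ^ 2 * J * W ≤ 8 * K ^ 5 * J * W := by
    have : K ^ 2 ≤ K ^ 5 := pow_le_pow_right₀ hK (by norm_num)
    gcongr
  have b6 : 0 ≤ J * (K ^ 5 * W) := by positivity
  have := abs_add_three (fσ * g * ((x ^ 3)⁻¹ - (q ^ 3)⁻¹)) (fσ * (g - J) * (q ^ 3)⁻¹)
    ((fσ - fl) * J * (q ^ 3)⁻¹)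
  nlinarith

theorem g17_minor (K r a b c d : ℝ) (hK : 0 ≤ K) (hr : 0 ≤ r) (ha : |a| ≤ K) (hd : |d| ≤ K)
    (hb : |b| ≤ K * r) (hc : |c| ≤ K * r) : (a * b - c * d) ^ 2 ≤ 4 * K ^ 4 * r ^ 2 := by
  have h : |a * b - c * d| ≤ 2 * K ^ 2 * r := by
    refine (abs_sub _ _).trans ?_
    rw [abs_mul, abs_mul]
    have h1 : |a| * |b| ≤ K * (K * r) := by gcongr
    have h2 : |c| * |d| ≤ (K * r) * K := by gcongr
    nlinarith
  rw [← sq_abs]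
  calc |a * b - c * d| ^ 2 ≤ (2 * K ^ 2 * r) ^ 2 := by gcongr
    _ = _ := by ring

theorem g17_inner_le (b : OrthonormalBasis (Fin 5) ℝ (EuclideanSpace ℝ (Fin 5))) (i : Fin 5)
    (v : EuclideanSpace ℝ (Fin 5)) : |(⟪b i, v⟫ : ℝ)| ≤ ‖v‖ := by
  have := abs_real_inner_le_norm (b i) v
  rwa [b.norm_eq_one, one_mul] at this

set_option maxHeartbeats 1000000 in
theorem g17_gram_J (b : OrthonormalBasis (Fin 5) ℝ (EuclideanSpace ℝ (Fin 5))) (K r : ℝ)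
    (hK : 1 ≤ K) (hr : 0 ≤ r) (hr1 : r ≤ 1 / (100 * K ^ 2))
    (H0 H : EuclideanSpace ℝ (Fin 2) →L[ℝ] EuclideanSpace ℝ (Fin 5))
    (hn : ∀ u, ⟪b 2, H0 u⟫ = 0 ∧ ⟪b 3, H0 u⟫ = 0 ∧ ⟪b 4, H0 u⟫ = 0)
    (hH : ‖H‖ ≤ K) (hd : ‖H - H0‖ ≤ K * r) (g : ℝ)
    (hg : g = ⟪H (EuclideanSpace.single 0 1), H (EuclideanSpace.single 0 1)⟫ *
        ⟪H (EuclideanSpace.single 1 1), H (EuclideanSpace.single 1 1)⟫ -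
        ⟪H (EuclideanSpace.single 0 1), H (EuclideanSpace.single 1 1)⟫ ^ 2) (hg1 : 1 ≤ g) :
    Real.sqrt g ≤ K ^ 2 ∧ 1 / 2 ≤ |((g17_Pi (b 0) (b 1)).comp H).det| ∧
    |Real.sqrt g - (|((g17_Pi (b 0) (b 1)).comp H).det|)| ≤ 36 * K ^ 4 * r ^ 2 := by
  have hK0 : 0 ≤ K := by linarith
  have hKK : 1 ≤ K ^ 2 := one_le_pow₀ hK
  have hr1' : K ^ 2 * r ≤ 1 / 100 := by
    have := mul_le_mul_of_nonneg_left hr1 (by positivity : 0 ≤ K ^ 2)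
    refine this.trans (le_of_eq ?_)
    field_simp
  have hr2 : r ≤ 1 := by nlinarith
  set J := ((g17_Pi (b 0) (b 1)).comp H).det with hJ
  rw [g17_Pi_det] at hJ
  have hN : ∀ i : Fin 2, ‖H (EuclideanSpace.single i 1)‖ ≤ K := by
    intro i
    have := H.le_of_opNorm_le hH (EuclideanSpace.single i 1)
    simpa using this
  have hD : ∀ i : Fin 2, ‖H (EuclideanSpace.single i 1) - H0 (EuclideanSpace.single i 1)‖
      ≤ K * r := by
    intro i
    have := (H - H0).le_of_opNorm_le hd (EuclideanSpace.single i 1)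
    simpa using this
  have hc : ∀ (k : Fin 5) (i : Fin 2), |⟪b k, H (EuclideanSpace.single i 1)⟫| ≤ K :=
    fun k i => (g17_inner_le b k _).trans (hN i)
  have hs : ∀ (k : Fin 5) (i : Fin 2), ⟪b k, H0 (EuclideanSpace.single i 1)⟫ = 0 →
      |⟪b k, H (EuclideanSpace.single i 1)⟫| ≤ K * r := by
    intro k i h0
    have := (g17_inner_le b k _).trans (hD i)
    rwa [inner_sub_right, h0, sub_zero] at this
  have s2 := fun i => hs 2 i (hn _).1
  have s3 := fun i => hs 3 i (hn _).2.1
  have s4 := fun i => hs 4 i (hn _).2.2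
  have hgK : g ≤ (K ^ 2) ^ 2 := by
    rw [hg, real_inner_self_eq_norm_sq, real_inner_self_eq_norm_sq]
    have : ‖H (EuclideanSpace.single 0 1)‖ ^ 2 * ‖H (EuclideanSpace.single 1 1)‖ ^ 2 ≤
      K ^ 2 * K ^ 2 := by
      gcongr
      · exact hN 0
      · exact hN 1
    nlinarith [sq_nonneg ⟪H (EuclideanSpace.single 0 1), H (EuclideanSpace.single 1 1)⟫]
  rw [g17_lagrange b, ← hJ] at hg
  have m02 := g17_minor K r _ _ _ _ hK0 hr (hc 0 0) (hc 0 1) (s2 1) (s2 0)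
  have m03 := g17_minor K r _ _ _ _ hK0 hr (hc 0 0) (hc 0 1) (s3 1) (s3 0)
  have m04 := g17_minor K r _ _ _ _ hK0 hr (hc 0 0) (hc 0 1) (s4 1) (s4 0)
  have m12 := g17_minor K r _ _ _ _ hK0 hr (hc 1 0) (hc 1 1) (s2 1) (s2 0)
  have m13 := g17_minor K r _ _ _ _ hK0 hr (hc 1 0) (hc 1 1) (s3 1) (s3 0)
  have m14 := g17_minor K r _ _ _ _ hK0 hr (hc 1 0) (hc 1 1) (s4 1) (s4 0)
  have m23 := g17_minor K r _ _ _ _ hK0 hr (hc 2 0) (hc 2 1) (s3 1) (s3 0)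
  have m24 := g17_minor K r _ _ _ _ hK0 hr (hc 2 0) (hc 2 1) (s4 1) (s4 0)
  have m34 := g17_minor K r _ _ _ _ hK0 hr (hc 3 0) (hc 3 1) (s4 1) (s4 0)
  have up : g ≤ J ^ 2 + 36 * K ^ 4 * r ^ 2 := by linarith
  have lo : J ^ 2 ≤ g := by
    rw [hg]
    simp only [add_assoc]
    exact le_add_of_nonneg_right (by positivity)
  clear_value J
  clear m02 m03 m04 m12 m13 m14 m23 m24 m34 s2 s3 s4 hs hc hD hN hg hJ hn
  have hsg : Real.sqrt g ^ 2 = g := Real.sq_sqrt (by linarith)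
  have hsg1 : 1 ≤ Real.sqrt g := Real.one_le_sqrt.2 hg1
  have hJs : |J| ≤ Real.sqrt g := Real.abs_le_sqrt lo
  have hJ2 : |J| ^ 2 = J ^ 2 := sq_abs J
  have hJ0 := abs_nonneg J
  refine ⟨Real.sqrt_le_iff.2 ⟨by positivity, hgK⟩, ?_, ?_⟩
  · have : K ^ 4 * r ^ 2 ≤ (1 / 100) ^ 2 := by
      calc K ^ 4 * r ^ 2 = (K ^ 2 * r) ^ 2 := by ring
        _ ≤ _ := by gcongr
    by_contra hcon
    push Not at hcon
    have : |J| ^ 2 ≤ (1 / 2) ^ 2 := by gcongr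
    linarith
  · rw [abs_of_nonneg (by linarith)]
    have h1 : (Real.sqrt g - |J|) * 1 ≤ (Real.sqrt g - |J|) * (Real.sqrt g + |J|) :=
      mul_le_mul_of_nonneg_left (by linarith) (by linarith)
    have h2 : (Real.sqrt g - |J|) * (Real.sqrt g + |J|) = g - J ^ 2 := by
      have h3 : (Real.sqrt g - |J|) * (Real.sqrt g + |J|) = Real.sqrt g ^ 2 - |J| ^ 2 := by ring
      rw [h3, hsg, hJ2]
    linarith

theorem g17_small (K p : ℝ) (hK : 1 ≤ K) (hp0 : 0 ≤ p) (hpK : K ^ 2 * p ≤ 1 / 100) :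
    48 * K ^ 2 * p ^ 4 ≤ p ^ 2 / 2 := by
  have h1 : p ≤ 1 / 100 := by nlinarith [one_le_pow₀ hK (n := 2)]
  have h2 : K ^ 2 * p * p ≤ 1 / 100 * 1 := by
    apply mul_le_mul hpK (by linarith) hp0 (by norm_num)
  have : 48 * K ^ 2 * p ^ 4 = 48 * (K ^ 2 * p * p) * p ^ 2 := by ring
  rw [this]
  nlinarith [sq_nonneg p]

set_option maxHeartbeats 1000000 in
theorem g17_dist (b : OrthonormalBasis (Fin 5) ℝ (EuclideanSpace ℝ (Fin 5))) (K r : ℝ)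
    (hK : 1 ≤ K) (v w : EuclideanSpace ℝ (Fin 5)) (t1 t2 t3 : ℝ)
    (hn : ⟪b 2, w⟫ = 0 ∧ ⟪b 3, w⟫ = 0 ∧ ⟪b 4, w⟫ = 0)
    (hr : 0 ≤ r) (hv : ‖v - w‖ ≤ K * r ^ 2) (hrp : r ≤ 2 * ‖g17_Pi (b 0) (b 1) v‖)
    (hp : ‖g17_Pi (b 0) (b 1) v‖ ≤ 1 / (100 * K ^ 2)) (x q p T : ℝ) (hT : T = Real.sqrt (t1 ^ 2 + t2 ^ 2 + t3 ^ 2))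
    (hpp : p = ‖g17_Pi (b 0) (b 1) v‖)
    (hx : x = ‖t1 • b 2 + t2 • b 3 + t3 • b 4 - v‖) (hq : q = Real.sqrt (T ^ 2 + p ^ 2)) :
    |x ^ 2 - q ^ 2| ≤ 48 * K ^ 2 * (T * p ^ 2 + p ^ 4) ∧ q / 2 ≤ x := by
  have hK0 : 0 ≤ K := by linarith
  have hη : ∀ k : Fin 5, ⟪b k, w⟫ = 0 → |⟪b k, v⟫| ≤ 4 * K * p ^ 2 := by
    intro k hk
    have := (g17_inner_le b k _).trans hv
    rw [inner_sub_right, hk, sub_zero] at this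
    rw [← hpp] at hrp
    have : K * r ^ 2 ≤ K * (2 * p) ^ 2 := by gcongr
    nlinarith
  have η2 := hη 2 hn.1
  have η3 := hη 3 hn.2.1
  have η4 := hη 4 hn.2.2
  have hp2 : p ^ 2 = ⟪b 0, v⟫ ^ 2 + ⟪b 1, v⟫ ^ 2 := by rw [hpp, g17_Pi_normsq]
  have hT2 : T ^ 2 = t1 ^ 2 + t2 ^ 2 + t3 ^ 2 := by rw [hT, Real.sq_sqrt (by positivity)]
  have hT0 : 0 ≤ T := by rw [hT]; positivity
  have hq2 : q ^ 2 = T ^ 2 + p ^ 2 := by rw [hq, Real.sq_sqrt (by positivity)]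
  have hq0 : 0 ≤ q := by rw [hq]; positivity
  have hx0 : 0 ≤ x := by rw [hx]; positivity
  have hx2 : x ^ 2 = p ^ 2 + (t1 - ⟪b 2, v⟫) ^ 2 + (t2 - ⟪b 3, v⟫) ^ 2 + (t3 - ⟪b 4, v⟫) ^ 2 := by
    rw [hx, g17_normsq b, hp2]
    simp only [inner_sub_right, inner_add_right, inner_smul_right, b.inner_eq_ite]
    simp
  have hp0 : 0 ≤ p := by rw [hpp]; positivity
  have hpK : K ^ 2 * p ≤ 1 / 100 := by
    have := mul_le_mul_of_nonneg_left hp (by positivity : 0 ≤ K ^ 2)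
    rw [← hpp] at this
    refine this.trans (le_of_eq ?_)
    field_simp
  clear hη hp hx hq hp2 hv hrp hpp
  generalize ⟪b 2, v⟫ = a2 at *
  generalize ⟪b 3, v⟫ = a3 at *
  generalize ⟪b 4, v⟫ = a4 at *
  have sq : ∀ a : ℝ, |a| ≤ 4 * K * p ^ 2 → a ^ 2 ≤ 16 * K ^ 2 * p ^ 4 := by
    intro a ha
    rw [← sq_abs]
    calc |a| ^ 2 ≤ (4 * K * p ^ 2) ^ 2 := by gcongr
      _ = _ := by ring
  have sq2 := sq a2 η2
  have sq3 := sq a3 η3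
  have sq4 := sq a4 η4
  have tT : ∀ t : ℝ, t ^ 2 ≤ T ^ 2 → ∀ a : ℝ, |a| ≤ 4 * K * p ^ 2 →
      |2 * t * a| ≤ 8 * K * T * p ^ 2 := by
    intro t ht a ha
    have : |t| ≤ T := abs_le_of_sq_le_sq ht hT0
    rw [abs_mul, abs_mul, abs_two]
    calc 2 * |t| * |a| ≤ 2 * T * (4 * K * p ^ 2) := by gcongr
      _ = _ := by ring
  have c1 := abs_le.1 (tT t1 (by nlinarith) a2 η2)
  have c2 := abs_le.1 (tT t2 (by nlinarith) a3 η3)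
  have c3 := abs_le.1 (tT t3 (by nlinarith) a4 η4)
  have hKK : K ≤ K ^ 2 := by nlinarith
  have hKT : 24 * K * T * p ^ 2 ≤ 48 * K ^ 2 * (T * p ^ 2) := by
    have : K * (T * p ^ 2) ≤ K ^ 2 * (T * p ^ 2) := by gcongr
    have : 0 ≤ K * (T * p ^ 2) := by positivity
    linarith
  constructor
  · have e : x ^ 2 - q ^ 2 = -(2 * t1 * a2) - 2 * t2 * a3 - 2 * t3 * a4 +
        (a2 ^ 2 + a3 ^ 2 + a4 ^ 2) := by
      rw [hx2, hq2, hT2]; ring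
    rw [e, abs_le]
    have n2 := sq_nonneg a2
    have n3 := sq_nonneg a3
    have n4 := sq_nonneg a4
    have n5 : 0 ≤ 48 * K ^ 2 * p ^ 4 := by positivity
    constructor <;> linarith
  · have small := g17_small K p hK hp0 hpK
    have : (q / 2) ^ 2 ≤ x ^ 2 := by
      have n2 := sq_nonneg (t1 - 2 * a2)
      have n3 := sq_nonneg (t2 - 2 * a3)
      have n4 := sq_nonneg (t3 - 2 * a4)
      have n5 := sq_nonneg p
      have n6 := sq_nonneg T
      have e : (q / 2) ^ 2 = (T ^ 2 + p ^ 2) / 4 := by rw [← hq2]; ring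
      rw [e, hx2]
      linarith
    exact (sq_le_sq₀ (by positivity) hx0).1 this


theorem g17_Pi_norm (b : OrthonormalBasis (Fin 5) ℝ (EuclideanSpace ℝ (Fin 5)))
    (v : EuclideanSpace ℝ (Fin 5)) : ‖g17_Pi (b 0) (b 1) v‖ ≤ ‖v‖ := by
  refine (sq_le_sq₀ (norm_nonneg _) (norm_nonneg _)).1 ?_
  rw [g17_Pi_normsq, g17_normsq b v]
  nlinarith [sq_nonneg ⟪b 2, v⟫, sq_nonneg ⟪b 3, v⟫, sq_nonneg ⟪b 4, v⟫]

theorem g17_Pi_eq (b : OrthonormalBasis (Fin 5) ℝ (EuclideanSpace ℝ (Fin 5)))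
    (v : EuclideanSpace ℝ (Fin 5)) (hn : ⟪b 2, v⟫ = 0 ∧ ⟪b 3, v⟫ = 0 ∧ ⟪b 4, v⟫ = 0) :
    ‖g17_Pi (b 0) (b 1) v‖ = ‖v‖ := by
  refine (sq_eq_sq₀ (norm_nonneg _) (norm_nonneg _)).1 ?_
  rw [g17_Pi_normsq, g17_normsq b v, hn.1, hn.2.1, hn.2.2]
  ring

/-- A linear self-map of the plane that does not shrink has a right inverse of norm at most 1. -/
theorem g17_inverse (A : EuclideanSpace ℝ (Fin 2) →L[ℝ] EuclideanSpace ℝ (Fin 2))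
    (hA : ∀ u, ‖u‖ ≤ ‖A u‖) : ∃ B : EuclideanSpace ℝ (Fin 2) →L[ℝ] EuclideanSpace ℝ (Fin 2),
      (∀ u, B (A u) = u) ∧ (∀ y, A (B y) = y) ∧ ∀ y, ‖B y‖ ≤ ‖y‖ := by
  have hinj : Function.Injective (A : EuclideanSpace ℝ (Fin 2) →ₗ[ℝ] EuclideanSpace ℝ (Fin 2)) := by
    rw [injective_iff_map_eq_zero]
    intro u hu
    have := hA u
    have hu' : A u = 0 := hu
    rw [hu', norm_zero] at this
    exact norm_le_zero_iff.1 this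
  let e := LinearEquiv.ofInjectiveEndo _ hinj
  have he : ∀ u, e u = A u := fun u => rfl
  have hAe : ∀ y, A (e.symm y) = y := fun y => by rw [← he, e.apply_symm_apply]
  refine ⟨e.symm.toContinuousLinearEquiv, fun u => ?_, hAe, fun y => ?_⟩
  · exact e.symm_apply_apply u
  · have := hA (e.symm y)
    rw [hAe] at this
    exact this

set_option maxHeartbeats 1000000 in
theorem g17_main (K : ℝ) (hK : 1 ≤ K) (h : EuclideanSpace ℝ (Fin 2) → EuclideanSpace ℝ (Fin 5))
    (H : EuclideanSpace ℝ (Fin 2) → EuclideanSpace ℝ (Fin 2) →L[ℝ] EuclideanSpace ℝ (Fin 5))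
    (f : EuclideanSpace ℝ (Fin 2) → ℝ)
    (F : EuclideanSpace ℝ (Fin 2) → EuclideanSpace ℝ (Fin 2) →L[ℝ] ℝ)
    (g : EuclideanSpace ℝ (Fin 2) → ℝ)
    (hd : ∀ σ ∈ Metric.ball (0 : EuclideanSpace ℝ (Fin 2)) 1, HasFDerivAt h (H σ) σ)
    (hB : ∀ σ ∈ Metric.ball (0 : EuclideanSpace ℝ (Fin 2)) 1, ‖H σ‖ ≤ K)
    (hL : ∀ σ ∈ Metric.ball (0 : EuclideanSpace ℝ (Fin 2)) 1,
      ∀ τ ∈ Metric.ball (0 : EuclideanSpace ℝ (Fin 2)) 1, ‖H σ - H τ‖ ≤ K * ‖σ - τ‖)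
    (hlow : ∀ σ τ, ‖σ - τ‖ ≤ ‖h σ - h τ‖) (hHlow : ∀ σ u, ‖u‖ ≤ ‖H σ u‖)
    (hg : ∀ σ ∈ Metric.ball (0 : EuclideanSpace ℝ (Fin 2)) 1,
      g σ = ⟪H σ (EuclideanSpace.single 0 1), H σ (EuclideanSpace.single 0 1)⟫ *
        ⟪H σ (EuclideanSpace.single 1 1), H σ (EuclideanSpace.single 1 1)⟫ -
        ⟪H σ (EuclideanSpace.single 0 1), H σ (EuclideanSpace.single 1 1)⟫ ^ 2)
    (hg1 : ∀ σ ∈ Metric.ball (0 : EuclideanSpace ℝ (Fin 2)) 1, 1 ≤ g σ)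
    (hgm : Measurable g)
    (hf : ∀ σ ∈ Metric.ball (0 : EuclideanSpace ℝ (Fin 2)) 1, |f σ| ≤ K)
    (hF : ∀ σ ∈ Metric.ball (0 : EuclideanSpace ℝ (Fin 2)) 1, HasFDerivAt f (F σ) σ)
    (hFB : ∀ σ ∈ Metric.ball (0 : EuclideanSpace ℝ (Fin 2)) 1, ‖F σ‖ ≤ K)
    (hFL : ∀ σ ∈ Metric.ball (0 : EuclideanSpace ℝ (Fin 2)) 1,
      ∀ τ ∈ Metric.ball (0 : EuclideanSpace ℝ (Fin 2)) 1, ‖F σ - F τ‖ ≤ K * ‖σ - τ‖)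
    (σ₀ : EuclideanSpace ℝ (Fin 2)) (hσ₀ : ‖σ₀‖ ≤ 1 / 2)
    (b : OrthonormalBasis (Fin 5) ℝ (EuclideanSpace ℝ (Fin 5)))
    (hn : ∀ u, ⟪b 2, H σ₀ u⟫ = 0 ∧ ⟪b 3, H σ₀ u⟫ = 0 ∧ ⟪b 4, H σ₀ u⟫ = 0)
    (t1 t2 t3 : ℝ) (ht : 0 < t1 ^ 2 + t2 ^ 2 + t3 ^ 2) (δ : ℝ) (hδ : δ = 1 / (100 * K ^ 2))
    (htc : Real.sqrt (t1 ^ 2 + t2 ^ 2 + t3 ^ 2) ≤ δ / 2) (Φ : EuclideanSpace ℝ (Fin 2) → ℝ)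
    (hΦ : Φ = fun σ => f σ * (‖(h σ₀ + t1 • b 2 + t2 • b 3 + t3 • b 4) - h σ‖ ^ 3)⁻¹ *
      Real.sqrt (g σ)) :
    IntegrableOn Φ (Metric.ball 0 1) ∧
    |(∫ σ in Metric.ball (0 : EuclideanSpace ℝ (Fin 2)) 1, Φ σ) -
      f σ₀ * (2 * Real.pi / Real.sqrt (t1 ^ 2 + t2 ^ 2 + t3 ^ 2))| ≤
      K * (2 * Real.pi / (δ / 4)) + 1500 * K ^ 5 * (2 * Real.pi + 2 * Real.pi * (δ / 4)) +
        K * ((δ / 4) ^ 3)⁻¹ * K ^ 2 * Real.pi := by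
  set T := Real.sqrt (t1 ^ 2 + t2 ^ 2 + t3 ^ 2) with hT
  have hT0 : 0 < T := Real.sqrt_pos.2 ht
  have hK0 : 0 < K := by linarith
  have hKK : 1 ≤ K ^ 2 := one_le_pow₀ hK
  have hδ0 : 0 < δ := by rw [hδ]; positivity
  have hKδ2 : K ^ 2 * δ = 1 / 100 := by rw [hδ]; field_simp
  have hδ1 : δ ≤ 1 / 100 := by nlinarith
  have hKδ : K * δ ≤ 1 / 2 := by nlinarith
  have hsub : Metric.ball σ₀ δ ⊆ Metric.ball (0 : EuclideanSpace ℝ (Fin 2)) 1 := by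
    intro σ hσ
    rw [Metric.mem_ball, dist_eq_norm] at hσ
    rw [mem_ball_zero_iff]
    have := norm_add_le (σ - σ₀) σ₀
    rw [sub_add_cancel] at this
    linarith
  have h0 : σ₀ ∈ Metric.ball (0 : EuclideanSpace ℝ (Fin 2)) 1 :=
    hsub (Metric.mem_ball_self hδ0)
  set Q := g17_Pi (b 0) (b 1) with hQ
  set ψ : EuclideanSpace ℝ (Fin 2) → EuclideanSpace ℝ (Fin 2) := fun σ => Q (h σ - h σ₀) with hψ
  have hψd : ∀ σ ∈ Metric.ball (0 : EuclideanSpace ℝ (Fin 2)) 1,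
      HasFDerivAt ψ (Q.comp (H σ)) σ := fun σ hσ =>
    Q.hasFDerivAt.comp σ ((hd σ hσ).sub_const (h σ₀))
  set A := Q.comp (H σ₀) with hA
  have hAlow : ∀ u, ‖u‖ ≤ ‖A u‖ := fun u => by
    have := g17_Pi_eq b (H σ₀ u) (hn u)
    rw [hA, ContinuousLinearMap.comp_apply, hQ, this]
    exact hHlow σ₀ u
  obtain ⟨B, hBA, hAB, hBn⟩ := g17_inverse A hAlow
  -- approximation by the linear map
  have happ : ApproximatesLinearOn ψ A (Metric.ball σ₀ δ) (1 / 2) := by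
    intro x hx y hy
    have := (convex_ball σ₀ δ).norm_image_sub_le_of_norm_hasFDerivWithin_le' (f := h) (f' := H)
      (φ := H σ₀) (C := 1 / 2) (x := y) (y := x)
      (fun z hz => (hd z (hsub hz)).hasFDerivWithinAt)
      (fun z hz => by
        rw [Metric.mem_ball, dist_eq_norm] at hz
        calc _ ≤ K * ‖z - σ₀‖ := hL z (hsub (by rwa [Metric.mem_ball, dist_eq_norm])) σ₀ h0
          _ ≤ K * δ := by gcongr
          _ ≤ _ := hKδ) hy hx
    have e : ψ x - ψ y - A (x - y) = Q (h x - h y - H σ₀ (x - y)) := by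
      simp only [hψ, hA, ContinuousLinearMap.comp_apply, map_sub]
      abel
    rw [e]
    refine (g17_Pi_norm b _).trans (this.trans (le_of_eq ?_))
    simp
  have hexp : ∀ x ∈ Metric.ball σ₀ δ, ∀ y ∈ Metric.ball σ₀ δ, ‖x - y‖ ≤ 2 * ‖ψ x - ψ y‖ := by
    intro x hx y hy
    have h1 := happ x hx y hy
    have h2 := hAlow (x - y)
    have h3 := norm_sub_norm_le (A (x - y)) (ψ x - ψ y)
    rw [norm_sub_rev (A (x - y))] at h3
    have h4 : (((1 / 2 : NNReal)) : ℝ) = 1 / 2 := by norm_num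
    rw [h4] at h1
    linarith
  have hψ0 : ψ σ₀ = 0 := by simp [hψ]
  have hsurj : Metric.ball (0 : EuclideanSpace ℝ (Fin 2)) (δ / 4) ⊆ ψ '' (Metric.ball σ₀ δ) := by
    have := happ.surjOn_closedBall_of_nonlinearRightInverse
      ⟨B, 1, fun y => by simpa using hBn y, hAB⟩ (ε := δ / 2) (b := σ₀) (by positivity)
      (Metric.closedBall_subset_ball (by linarith))
    intro y hy
    have hy' : y ∈ Metric.closedBall (ψ σ₀) ((((1 : NNReal) : ℝ)⁻¹ - ((1 / 2 : NNReal) : ℝ)) * (δ / 2)) := by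
      rw [hψ0, mem_closedBall_zero_iff]
      rw [mem_ball_zero_iff] at hy
      norm_num
      linarith
    obtain ⟨x, hx, hxy⟩ := this hy'
    exact ⟨x, Metric.closedBall_subset_ball (by linarith) hx, hxy⟩
  set U := Metric.ball σ₀ δ ∩ ψ ⁻¹' (Metric.ball 0 (δ / 4)) with hU
  have hUo : IsOpen U := by
    refine ContinuousOn.isOpen_inter_preimage ?_ Metric.isOpen_ball Metric.isOpen_ball
    exact fun σ hσ => (hψd σ (hsub hσ)).continuousAt.continuousWithinAt
  have hUsub : U ⊆ Metric.ball (0 : EuclideanSpace ℝ (Fin 2)) 1 := fun σ hσ => hsub hσ.1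
  have himg : ψ '' U = Metric.ball 0 (δ / 4) := by
    apply Set.Subset.antisymm
    · rintro _ ⟨x, hx, rfl⟩
      exact hx.2
    · intro y hy
      obtain ⟨x, hx, rfl⟩ := hsurj hy
      exact ⟨x, ⟨hx, hy⟩, rfl⟩
  have hinj : Set.InjOn ψ U := by
    intro x hx y hy hxy
    have := hexp x hx.1 y hy.1
    rw [hxy, sub_self, norm_zero, mul_zero] at this
    exact sub_eq_zero.1 (norm_le_zero_iff.1 this)
  set s := h σ₀ + t1 • b 2 + t2 • b 3 + t3 • b 4 with hs
  have hsv : ∀ σ, s - h σ = t1 • b 2 + t2 • b 3 + t3 • b 4 - (h σ - h σ₀) := fun σ => by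
    rw [hs]; abel
  -- bound on the square root of the Gram determinant
  have hgK : ∀ σ ∈ Metric.ball (0 : EuclideanSpace ℝ (Fin 2)) 1, Real.sqrt (g σ) ≤ K ^ 2 := by
    intro σ hσ
    refine Real.sqrt_le_iff.2 ⟨by positivity, ?_⟩
    have hN : ∀ i : Fin 2, ‖H σ (EuclideanSpace.single i 1)‖ ≤ K := by
      intro i
      have := (H σ).le_of_opNorm_le (hB σ hσ) (EuclideanSpace.single i 1)
      simpa using this
    rw [hg σ hσ, real_inner_self_eq_norm_sq, real_inner_self_eq_norm_sq]
    have : ‖H σ (EuclideanSpace.single 0 1)‖ ^ 2 * ‖H σ (EuclideanSpace.single 1 1)‖ ^ 2 ≤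
      K ^ 2 * K ^ 2 := by
      gcongr
      · exact hN 0
      · exact hN 1
    nlinarith [sq_nonneg ⟪H σ (EuclideanSpace.single 0 1), H σ (EuclideanSpace.single 1 1)⟫]
  -- distance on U
  have hdist : ∀ σ ∈ U, |‖s - h σ‖ ^ 2 - Real.sqrt (T ^ 2 + ‖ψ σ‖ ^ 2) ^ 2| ≤
      48 * K ^ 2 * (T * ‖ψ σ‖ ^ 2 + ‖ψ σ‖ ^ 4) ∧
      Real.sqrt (T ^ 2 + ‖ψ σ‖ ^ 2) / 2 ≤ ‖s - h σ‖ := by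
    intro σ hσ
    have hp := hσ.2
    rw [Set.mem_preimage, mem_ball_zero_iff] at hp
    refine g17_dist b K ‖σ - σ₀‖ hK (h σ - h σ₀) (H σ₀ (σ - σ₀)) t1 t2 t3 (hn _) (norm_nonneg _)
      (g17_taylor h H K hK0.le hd hL σ₀ σ h0 (hUsub hσ)) ?_ ?_ _ _ _ T hT rfl
      (by rw [hsv]) rfl
    · have := hexp σ hσ.1 σ₀ (Metric.mem_ball_self hδ0)
      rwa [hψ0, sub_zero] at this
    · rw [← hδ]
      have : ‖ψ σ‖ ≤ δ := by linarith
      exact this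
  -- distance outside U
  have hout : ∀ σ, σ ∉ U → δ / 4 ≤ ‖s - h σ‖ := by
    intro σ hσ
    by_cases hσ1 : σ ∈ Metric.ball σ₀ δ
    · have h2 : δ / 4 ≤ ‖ψ σ‖ := by
        by_contra hcon
        push Not at hcon
        exact hσ ⟨hσ1, by rwa [Set.mem_preimage, mem_ball_zero_iff]⟩
      refine h2.trans ((sq_le_sq₀ (norm_nonneg _) (norm_nonneg _)).1 ?_)
      rw [g17_normsq b, hsv]
      have e : ‖ψ σ‖ ^ 2 = ⟪b 0, h σ - h σ₀⟫ ^ 2 + ⟪b 1, h σ - h σ₀⟫ ^ 2 := g17_Pi_normsq _ _ _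
      rw [e]
      have e0 : ⟪b 0, t1 • b 2 + t2 • b 3 + t3 • b 4 - (h σ - h σ₀)⟫ = - ⟪b 0, h σ - h σ₀⟫ := by
        rw [inner_sub_right]
        simp [inner_add_right, inner_smul_right, b.inner_eq_ite]
      have e1 : ⟪b 1, t1 • b 2 + t2 • b 3 + t3 • b 4 - (h σ - h σ₀)⟫ = - ⟪b 1, h σ - h σ₀⟫ := by
        rw [inner_sub_right]
        simp [inner_add_right, inner_smul_right, b.inner_eq_ite]
      rw [e0, e1, neg_sq, neg_sq, add_assoc _ _ (_ ^ 2 : ℝ), add_assoc, add_assoc]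
      have : ∀ a c d e f : ℝ, a ^ 2 + c ^ 2 ≤ a ^ 2 + (c ^ 2 + d ^ 2 + (e ^ 2 + f ^ 2)) := by
        intro a c d e f; nlinarith [sq_nonneg d, sq_nonneg e, sq_nonneg f]
      nlinarith [sq_nonneg ⟪b 2, t1 • b 2 + t2 • b 3 + t3 • b 4 - (h σ - h σ₀)⟫,
        sq_nonneg ⟪b 3, t1 • b 2 + t2 • b 3 + t3 • b 4 - (h σ - h σ₀)⟫,
        sq_nonneg ⟪b 4, t1 • b 2 + t2 • b 3 + t3 • b 4 - (h σ - h σ₀)⟫]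
    · rw [Metric.mem_ball, dist_eq_norm, not_lt] at hσ1
      have h1 := hlow σ σ₀
      have h2 : ‖t1 • b 2 + t2 • b 3 + t3 • b 4‖ = T := by
        rw [hT]
        refine (Real.sqrt_eq_iff_eq_sq (by positivity) (norm_nonneg _)).2 ?_ |>.symm
        rw [g17_normsq b]
        simp [inner_add_right, inner_smul_right, b.inner_eq_ite]
      have h3 := norm_sub_norm_le (h σ - h σ₀) (t1 • b 2 + t2 • b 3 + t3 • b 4)
      rw [norm_sub_rev (h σ - h σ₀) (t1 • b 2 + t2 • b 3 + t3 • b 4), ← hsv, h2] at h3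
      linarith
  have hTq : ∀ y : EuclideanSpace ℝ (Fin 2), T ≤ Real.sqrt (T ^ 2 + ‖y‖ ^ 2) := fun y =>
    Real.le_sqrt_of_sq_le (by nlinarith [sq_nonneg ‖y‖])
  have hpq : ∀ y : EuclideanSpace ℝ (Fin 2), ‖y‖ ≤ Real.sqrt (T ^ 2 + ‖y‖ ^ 2) := fun y =>
    Real.le_sqrt_of_sq_le (by nlinarith [sq_nonneg T])
  have hmin : ∀ σ, min (T / 2) (δ / 4) ≤ ‖s - h σ‖ := by
    intro σ
    by_cases hσ : σ ∈ U
    · refine (min_le_left _ _).trans ?_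
      have := (hdist σ hσ).2
      have := hTq (ψ σ)
      linarith
    · exact (min_le_right _ _).trans (hout σ hσ)
  have hbd : ∀ m : ℝ, 0 < m → ∀ σ ∈ Metric.ball (0 : EuclideanSpace ℝ (Fin 2)) 1,
      m ≤ ‖s - h σ‖ → ‖Φ σ‖ ≤ K * (m ^ 3)⁻¹ * K ^ 2 := by
    intro m hm σ hσ hmσ
    rw [hΦ]
    simp only [Real.norm_eq_abs, abs_mul]
    rw [abs_of_nonneg (Real.sqrt_nonneg _), abs_of_nonneg (by positivity : 0 ≤ (‖s - h σ‖ ^ 3)⁻¹)]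
    have h1 := hf σ hσ
    have h2 := hgK σ hσ
    gcongr
  have hmeas : AEStronglyMeasurable Φ
      (volume.restrict (Metric.ball (0 : EuclideanSpace ℝ (Fin 2)) 1)) := by
    have m1 : AEMeasurable f (volume.restrict (Metric.ball (0 : EuclideanSpace ℝ (Fin 2)) 1)) :=
      ContinuousOn.aemeasurable (fun σ hσ => (hF σ hσ).continuousAt.continuousWithinAt)
        Metric.isOpen_ball.measurableSet
    have m2 : AEMeasurable h (volume.restrict (Metric.ball (0 : EuclideanSpace ℝ (Fin 2)) 1)) :=
      ContinuousOn.aemeasurable (fun σ hσ => (hd σ hσ).continuousAt.continuousWithinAt)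
        Metric.isOpen_ball.measurableSet
    rw [hΦ]
    exact ((m1.mul (((m2.const_sub s).norm.pow_const 3).inv)).mul
      hgm.sqrt.aemeasurable).aestronglyMeasurable
  have hint : IntegrableOn Φ (Metric.ball 0 1) := by
    have hm0 : 0 < min (T / 2) (δ / 4) := lt_min (by positivity) (by positivity)
    haveI : IsFiniteMeasure
        (volume.restrict (Metric.ball (0 : EuclideanSpace ℝ (Fin 2)) 1)) :=
      isFiniteMeasure_restrict.2 measure_ball_lt_top.ne
    refine Integrable.of_bound hmeas (K * ((min (T / 2) (δ / 4)) ^ 3)⁻¹ * K ^ 2) ?_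
    refine (ae_restrict_iff' Metric.isOpen_ball.measurableSet).2
      (Filter.Eventually.of_forall fun σ hσ => hbd _ hm0 σ hσ (hmin σ))
  refine ⟨hint, ?_⟩
  have hcore := g17_core U hUo.measurableSet ψ (fun σ => Q.comp (H σ))
    (fun x hx => (hψd x (hUsub hx)).hasFDerivWithinAt) hinj T (δ / 4) hT0 (by positivity) himg
    Φ (hint.mono_set hUsub) (f σ₀) ((F σ₀).comp B) (1500 * K ^ 5) (by positivity) (by
      intro σ hσ
      have hσ1 := hUsub hσ
      have hr : ‖σ - σ₀‖ ≤ 2 * ‖ψ σ‖ := by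
        have := hexp σ hσ.1 σ₀ (Metric.mem_ball_self hδ0)
        rwa [hψ0, sub_zero] at this
      have hrδ : ‖σ - σ₀‖ ≤ δ := by
        have := hσ.1
        rw [Metric.mem_ball, dist_eq_norm] at this
        exact this.le
      have hr2 : ‖σ - σ₀‖ ^ 2 ≤ 4 * ‖ψ σ‖ ^ 2 := by
        calc ‖σ - σ₀‖ ^ 2 ≤ (2 * ‖ψ σ‖) ^ 2 := by gcongr
          _ = _ := by ring
      obtain ⟨j1, j2, j3⟩ := g17_gram_J b K ‖σ - σ₀‖ hK (norm_nonneg _) (by rw [← hδ]; exact hrδ)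
        (H σ₀) (H σ) hn (hB σ hσ1) (hL σ hσ1 σ₀ h0) (g σ) (hg σ hσ1) (hg1 σ hσ1)
      have hq0 : 0 < Real.sqrt (T ^ 2 + ‖ψ σ‖ ^ 2) := lt_of_lt_of_le hT0 (hTq _)
      rw [hΦ]
      refine g17_err K ‖s - h σ‖ (Real.sqrt (T ^ 2 + ‖ψ σ‖ ^ 2)) ‖ψ σ‖ T (f σ)
        (Real.sqrt (g σ)) _ _ hK hq0 (hdist σ hσ).2 (norm_nonneg _) (hpq _) hT0.le (hdist σ hσ).1
        (hf σ hσ1) j1 (Real.sqrt_nonneg _) (j3.trans ?_) j2 ?_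
      · calc 36 * K ^ 4 * ‖σ - σ₀‖ ^ 2 ≤ 36 * K ^ 4 * (4 * ‖ψ σ‖ ^ 2) := by gcongr
          _ = _ := by ring
      · have a1 := g17_taylor f F K hK0.le hF hFL σ₀ σ h0 hσ1
        have a2 := g17_taylor h H K hK0.le hd hL σ₀ σ h0 hσ1
        have a3 : ‖B (ψ σ) - (σ - σ₀)‖ ≤ K * ‖σ - σ₀‖ ^ 2 := by
          have e : B (ψ σ) - (σ - σ₀) = B (Q (h σ - h σ₀ - H σ₀ (σ - σ₀))) := by
            conv_lhs => rw [← hBA (σ - σ₀)]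
            rw [← map_sub]
            congr 1
            simp [hψ, hA]
          rw [e]
          exact (hBn _).trans ((g17_Pi_norm b _).trans a2)
        have a4 : |F σ₀ (B (ψ σ) - (σ - σ₀))| ≤ K * (K * ‖σ - σ₀‖ ^ 2) := by
          rw [← Real.norm_eq_abs]
          exact ((F σ₀).le_of_opNorm_le (hFB σ₀ h0) _).trans (by gcongr)
        rw [Real.norm_eq_abs] at a1
        have e : f σ - (f σ₀ + ((F σ₀).comp B) (ψ σ)) =
            (f σ - f σ₀ - F σ₀ (σ - σ₀)) - F σ₀ (B (ψ σ) - (σ - σ₀)) := by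
          rw [map_sub (F σ₀) (B (ψ σ)) (σ - σ₀), ContinuousLinearMap.comp_apply]
          ring
        rw [e]
        refine (abs_sub _ _).trans ?_
        have a5 : K * ‖σ - σ₀‖ ^ 2 ≤ K ^ 2 * ‖σ - σ₀‖ ^ 2 := by
          have : K ≤ K ^ 2 := by nlinarith
          gcongr
        have a6 : K ^ 2 * ‖σ - σ₀‖ ^ 2 ≤ K ^ 2 * (4 * ‖ψ σ‖ ^ 2) := by gcongr
        linarith)
  have hsplit : ∫ σ in Metric.ball (0 : EuclideanSpace ℝ (Fin 2)) 1, Φ σ =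
      (∫ σ in U, Φ σ) + ∫ σ in Metric.ball (0 : EuclideanSpace ℝ (Fin 2)) 1 \ U, Φ σ := by
    rw [← setIntegral_union Set.disjoint_sdiff_right
      (Metric.isOpen_ball.measurableSet.diff hUo.measurableSet) (hint.mono_set hUsub)
      (hint.mono_set Set.diff_subset), Set.union_diff_cancel hUsub]
  have hvol : (volume : Measure (EuclideanSpace ℝ (Fin 2))).real (Metric.ball 0 1) = Real.pi := by
    simp [Measure.real, EuclideanSpace.volume_ball_fin_two, Real.pi_nonneg]
  have hrest : |∫ σ in Metric.ball (0 : EuclideanSpace ℝ (Fin 2)) 1 \ U, Φ σ| ≤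
      K * ((δ / 4) ^ 3)⁻¹ * K ^ 2 * Real.pi := by
    rw [← Real.norm_eq_abs, ← hvol]
    refine (norm_setIntegral_le_of_norm_le_const (C := K * ((δ / 4) ^ 3)⁻¹ * K ^ 2)
      ((measure_mono Set.diff_subset).trans_lt measure_ball_lt_top)
      (fun σ hσ => hbd _ (by positivity) σ hσ.1 (hout σ hσ.2))).trans ?_
    have := measureReal_mono (μ := (volume : Measure (EuclideanSpace ℝ (Fin 2))))
      (Set.diff_subset (s := Metric.ball (0 : EuclideanSpace ℝ (Fin 2)) 1) (t := U))
      measure_ball_lt_top.ne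
    gcongr
  rw [hsplit]
  have hf0 : |f σ₀| * (2 * Real.pi / (δ / 4)) ≤ K * (2 * Real.pi / (δ / 4)) := by
    have := hf σ₀ h0
    have := Real.pi_pos
    gcongr
  have tri : ∀ a c d : ℝ, |a + c - d| ≤ |a - d| + |c| := fun a c d => by
    have := abs_add_le (a - d) c
    rwa [show a - d + c = a + c - d by ring] at this
  have := tri (∫ σ in U, Φ σ) (∫ σ in Metric.ball (0 : EuclideanSpace ℝ (Fin 2)) 1 \ U, Φ σ)
    (f σ₀ * (2 * Real.pi / T))
  linarith


/-- leading asymptote of the Green integral of a codimension-3 graphical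
submanifold `Γ = h({|σ| < 1}) ⊂ ℝ⁵`:
`|I_{Γ,f}(s) + f(σ₀)/(4π|t|)| ≤ C` at `s = h(σ₀) + Σ tᵢnᵢ` with `0 < |t| ≤ c`. -/
theorem statement17 : ∀ C₀ : ℝ, 1 ≤ C₀ → ∃ c C : ℝ, 0 < c ∧ 0 < C ∧
    ∀ f3 f4 f5 f : EuclideanSpace ℝ (Fin 2) → ℝ,
    ContDiffOn ℝ 2 f3 (Metric.closedBall 0 1) →
    ContDiffOn ℝ 2 f4 (Metric.closedBall 0 1) →
    ContDiffOn ℝ 2 f5 (Metric.closedBall 0 1) →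
    ContDiffOn ℝ 2 f (Metric.closedBall 0 1) →
    (∀ σ ∈ Metric.closedBall (0 : EuclideanSpace ℝ (Fin 2)) 1, ∀ k : ℕ, k ≤ 2 →
      ‖iteratedFDerivWithin ℝ k f3 (Metric.closedBall 0 1) σ‖ ≤ C₀ ∧
      ‖iteratedFDerivWithin ℝ k f4 (Metric.closedBall 0 1) σ‖ ≤ C₀ ∧
      ‖iteratedFDerivWithin ℝ k f5 (Metric.closedBall 0 1) σ‖ ≤ C₀ ∧
      ‖iteratedFDerivWithin ℝ k f (Metric.closedBall 0 1) σ‖ ≤ C₀) →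
    ∀ σ₀ : EuclideanSpace ℝ (Fin 2), ‖σ₀‖ ≤ 1 / 2 →
    ∀ n1 n2 n3 : EuclideanSpace ℝ (Fin 5),
    ‖n1‖ = 1 → ‖n2‖ = 1 → ‖n3‖ = 1 →
    ⟪n1, n2⟫ = 0 → ⟪n1, n3⟫ = 0 → ⟪n2, n3⟫ = 0 →
    (∀ i : Fin 2, ⟪n1, fderiv ℝ (graphMap f3 f4 f5) σ₀ (EuclideanSpace.single i 1)⟫ = 0) →
    (∀ i : Fin 2, ⟪n2, fderiv ℝ (graphMap f3 f4 f5) σ₀ (EuclideanSpace.single i 1)⟫ = 0) →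
    (∀ i : Fin 2, ⟪n3, fderiv ℝ (graphMap f3 f4 f5) σ₀ (EuclideanSpace.single i 1)⟫ = 0) →
    ∀ t1 t2 t3 : ℝ, 0 < t1 ^ 2 + t2 ^ 2 + t3 ^ 2 →
      Real.sqrt (t1 ^ 2 + t2 ^ 2 + t3 ^ 2) ≤ c →
    IntegrableOn (fun σ : EuclideanSpace ℝ (Fin 2) =>
        f σ * (‖(graphMap f3 f4 f5 σ₀ + t1 • n1 + t2 • n2 + t3 • n3)
          - graphMap f3 f4 f5 σ‖ ^ 3)⁻¹ * Real.sqrt (gramDet f3 f4 f5 σ))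
      (Metric.ball 0 1) ∧
    |(-(1 / (8 * Real.pi ^ 2)) * ∫ σ in Metric.ball (0 : EuclideanSpace ℝ (Fin 2)) 1,
        f σ * (‖(graphMap f3 f4 f5 σ₀ + t1 • n1 + t2 • n2 + t3 • n3)
          - graphMap f3 f4 f5 σ‖ ^ 3)⁻¹ * Real.sqrt (gramDet f3 f4 f5 σ))
      + f σ₀ / (4 * Real.pi * Real.sqrt (t1 ^ 2 + t2 ^ 2 + t3 ^ 2))| ≤ C := by
  intro C₀ hC₀
  have hK : 1 ≤ 1 + 3 * C₀ := by linarith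
  obtain ⟨K, hKdef⟩ : ∃ K, K = 1 + 3 * C₀ := ⟨_, rfl⟩
  rw [← hKdef] at hK
  have hCK : C₀ ≤ K := by linarith
  have hK0 : 0 < K := by linarith
  obtain ⟨δ, hδ⟩ : ∃ δ, δ = 1 / (100 * K ^ 2) := ⟨_, rfl⟩
  have hδ0 : 0 < δ := by rw [hδ]; positivity
  have hpi := Real.pi_pos
  refine ⟨δ / 2, 1 / (8 * Real.pi ^ 2) * (K * (2 * Real.pi / (δ / 4)) +
      1500 * K ^ 5 * (2 * Real.pi + 2 * Real.pi * (δ / 4)) +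
        K * ((δ / 4) ^ 3)⁻¹ * K ^ 2 * Real.pi), by positivity, by positivity, ?_⟩
  intro f3 f4 f5 f c3 c4 c5 cf hb σ₀ hσ₀ n1 n2 n3 hn1 hn2 hn3 h12 h13 h23 o1 o2 o3 t1 t2 t3 ht htc
  have B3 := g17_C2 C₀ f3 c3 (fun σ hσ k hk => (hb σ hσ k hk).1)
  have B4 := g17_C2 C₀ f4 c4 (fun σ hσ k hk => (hb σ hσ k hk).2.1)
  have B5 := g17_C2 C₀ f5 c5 (fun σ hσ k hk => (hb σ hσ k hk).2.2.1)
  have Bf := g17_C2 C₀ f cf (fun σ hσ k hk => (hb σ hσ k hk).2.2.2)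
  have hd : ∀ σ ∈ Metric.ball (0 : EuclideanSpace ℝ (Fin 2)) 1,
      HasFDerivAt (graphMap f3 f4 f5) (g17_H f3 f4 f5 σ) σ := fun σ hσ =>
    g17_graph_deriv f3 f4 f5 σ (B3 σ hσ).2.1 (B4 σ hσ).2.1 (B5 σ hσ).2.1
  have hmem : σ₀ ∈ Metric.ball (0 : EuclideanSpace ℝ (Fin 2)) 1 := by
    rw [mem_ball_zero_iff]; linarith
  have hg : ∀ σ ∈ Metric.ball (0 : EuclideanSpace ℝ (Fin 2)) 1, gramDet f3 f4 f5 σ =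
      ⟪g17_H f3 f4 f5 σ (EuclideanSpace.single 0 1),
        g17_H f3 f4 f5 σ (EuclideanSpace.single 0 1)⟫ *
      ⟪g17_H f3 f4 f5 σ (EuclideanSpace.single 1 1),
        g17_H f3 f4 f5 σ (EuclideanSpace.single 1 1)⟫ -
      ⟪g17_H f3 f4 f5 σ (EuclideanSpace.single 0 1),
        g17_H f3 f4 f5 σ (EuclideanSpace.single 1 1)⟫ ^ 2 := by
    intro σ hσ
    rw [gramDet, (hd σ hσ).fderiv]
  rw [(hd σ₀ hmem).fderiv] at o1 o2 o3
  obtain ⟨b, hb2, hb3, hb4⟩ := g17_basis n1 n2 n3 hn1 hn2 hn3 h12 h13 h23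
  have hext : ∀ n : EuclideanSpace ℝ (Fin 5),
      (∀ i : Fin 2, ⟪n, g17_H f3 f4 f5 σ₀ (EuclideanSpace.single i 1)⟫ = 0) →
      ∀ u, ⟪n, g17_H f3 f4 f5 σ₀ u⟫ = 0 := by
    intro n hn u
    have hu : u = u 0 • EuclideanSpace.single 0 (1 : ℝ) + u 1 • EuclideanSpace.single 1 (1 : ℝ) := by
      ext i
      fin_cases i <;> simp
    rw [hu, map_add, map_smul, map_smul, inner_add_right, inner_smul_right, inner_smul_right,
      hn 0, hn 1]
    simp
  have hgm : Measurable (gramDet f3 f4 f5) := by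
    have m0 := measurable_fderiv_apply_const ℝ (graphMap f3 f4 f5) (EuclideanSpace.single 0 1)
    have m1 := measurable_fderiv_apply_const ℝ (graphMap f3 f4 f5) (EuclideanSpace.single 1 1)
    exact ((m0.inner m0).mul (m1.inner m1)).sub ((m0.inner m1).pow_const 2)
  have main := g17_main K hK (graphMap f3 f4 f5) (g17_H f3 f4 f5) f (fderiv ℝ f)
    (gramDet f3 f4 f5) hd
    (fun σ hσ => by
      rw [hKdef]
      exact g17_H_norm f3 f4 f5 σ C₀ (B3 σ hσ).2.2.1 (B4 σ hσ).2.2.1 (B5 σ hσ).2.2.1)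
    (fun σ hσ τ hτ => by
      have := g17_H_lip f3 f4 f5 σ τ (C₀ * ‖σ - τ‖) ((B3 σ hσ).2.2.2 τ hτ)
        ((B4 σ hσ).2.2.2 τ hτ) ((B5 σ hσ).2.2.2 τ hτ)
      have h0 := norm_nonneg (σ - τ)
      rw [hKdef]
      linarith)
    (fun σ τ => g17_norm_first _ _ (by simp [graphMap]) (by simp [graphMap]))
    (fun σ u => g17_norm_first _ _ (g17_H_coord f3 f4 f5 σ u).1 (g17_H_coord f3 f4 f5 σ u).2)
    hg
    (fun σ hσ => by
      rw [hg σ hσ]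
      refine g17_gram_ge_one _ _ ?_ ?_ ?_ ?_
      · rw [(g17_H_coord f3 f4 f5 σ _).1]; simp
      · rw [(g17_H_coord f3 f4 f5 σ _).2]; simp
      · rw [(g17_H_coord f3 f4 f5 σ _).1]; simp
      · rw [(g17_H_coord f3 f4 f5 σ _).2]; simp)
    hgm (fun σ hσ => (Bf σ hσ).1.trans hCK) (fun σ hσ => (Bf σ hσ).2.1)
    (fun σ hσ => (Bf σ hσ).2.2.1.trans hCK)
    (fun σ hσ τ hτ => ((Bf σ hσ).2.2.2 τ hτ).trans
      (mul_le_mul_of_nonneg_right hCK (norm_nonneg _)))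
    σ₀ hσ₀ b
    (fun u => by
      rw [hb2, hb3, hb4]
      exact ⟨hext n1 o1 u, hext n2 o2 u, hext n3 o3 u⟩)
    t1 t2 t3 ht δ hδ htc _ rfl
  rw [hb2, hb3, hb4] at main
  refine ⟨main.1, ?_⟩
  have hT0 : 0 < Real.sqrt (t1 ^ 2 + t2 ^ 2 + t3 ^ 2) := Real.sqrt_pos.2 ht
  have hle := main.2
  generalize (∫ σ in Metric.ball (0 : EuclideanSpace ℝ (Fin 2)) 1,
        f σ * (‖(graphMap f3 f4 f5 σ₀ + t1 • n1 + t2 • n2 + t3 • n3)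
          - graphMap f3 f4 f5 σ‖ ^ 3)⁻¹ * Real.sqrt (gramDet f3 f4 f5 σ)) = I at hle ⊢
  generalize Real.sqrt (t1 ^ 2 + t2 ^ 2 + t3 ^ 2) = T at hle hT0 ⊢
  have e : -(1 / (8 * Real.pi ^ 2)) * I + f σ₀ / (4 * Real.pi * T) =
      -(1 / (8 * Real.pi ^ 2)) * (I - f σ₀ * (2 * Real.pi / T)) := by
    field_simp
    ring
  rw [e, abs_mul, abs_neg, abs_of_nonneg (by positivity : 0 ≤ 1 / (8 * Real.pi ^ 2))]
  exact mul_le_mul_of_nonneg_left hle (by positivity)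
end
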